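/- arXiv:1101.1653 — 2 statements merged into one kernel-verified Lean document; each statement's English description precedes it below -/
import Mathlib

section
/- There exists an absolute constant C > 0 such that for every integer n ≥ 2, ∑_{p prime, p < n} τ(n − p) ≤ C·n, where τ(k) denotes the number of positive divisors of k. -/
open Real

/-!
Of each pair of complementary divisors of `n - p` one is at most `√n`, so the sum is at most
`2 ∑_{d ≤ √n} #{p < n : p ≡ n mod d}`. Selberg's sieve with the weights supported on integers up to
`z ≈ n^{1/4}` bounds the inner count by `n / (φ(d) H_z) + O(z²)`, where `H_z` is a harmonic number;
the factor `φ(d)` instead of `d` comes from sieving only by primes that do not divide `d`. Since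
`∑_{d ≤ √n} 1/φ(d) = O(log n)` and `H_z ≫ log n`, the main terms add up to `O(n)`, and so do the
`√n` remainders of size `z² ≤ √n`.
-/

section SelbergSieve

open Finset BoundingSieve
open scoped ArithmeticFunction.Moebius ArithmeticFunction.zeta

theorem sum_divisors_moebius (n : ℕ) : ∑ d ∈ n.divisors, μ d = if n = 1 then 1 else 0 := by
  rw [← ArithmeticFunction.coe_mul_zeta_apply, ArithmeticFunction.moebius_mul_coe_zeta,
    ArithmeticFunction.one_apply]

theorem sum_divisors_filter_dvd_moebius {l m : ℕ} (hm : Squarefree m) :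
    ∑ d ∈ m.divisors with l ∣ d, μ d = if l = m then μ m else 0 := by
  by_cases hlm : l ∣ m
  · obtain ⟨c, rfl⟩ := hlm
    obtain ⟨hcop, -, -⟩ := Nat.squarefree_mul_iff.1 hm
    have hl : 0 < l := Nat.pos_of_ne_zero (left_ne_zero_of_mul hm.ne_zero)
    have hc : c ≠ 0 := right_ne_zero_of_mul hm.ne_zero
    have himage : {d ∈ (l * c).divisors | l ∣ d} = c.divisors.image (l * ·) := by
      ext d
      simp only [mem_filter, mem_image, Nat.mem_divisors]
      constructor
      · rintro ⟨⟨hd, -⟩, e, rfl⟩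
        exact ⟨e, ⟨Nat.dvd_of_mul_dvd_mul_left hl hd, hc⟩, rfl⟩
      · rintro ⟨e, ⟨he, -⟩, rfl⟩
        exact ⟨⟨Nat.mul_dvd_mul_left l he, hm.ne_zero⟩, dvd_mul_right l e⟩
    rw [himage, sum_image fun a _ b _ => Nat.eq_of_mul_eq_mul_left hl]
    calc ∑ e ∈ c.divisors, μ (l * e) = μ l * ∑ e ∈ c.divisors, μ e := by
          rw [mul_sum]
          exact sum_congr rfl fun e he =>
            ArithmeticFunction.isMultiplicative_moebius.map_mul_of_coprime
              (hcop.coprime_dvd_right (Nat.dvd_of_mem_divisors he))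
      _ = if l = l * c then μ (l * c) else 0 := by
          rw [sum_divisors_moebius]
          by_cases hc1 : c = 1 <;> simp [hc1, hl.ne']
  · rw [if_neg (by rintro rfl; exact hlm dvd_rfl), filter_false_of_mem, sum_empty]
    exact fun d hd hld => hlm (hld.trans (Nat.dvd_of_mem_divisors hd))

theorem lambdaSquared_eq_sum_sum_of_support {w : ℕ → ℝ} {D : Finset ℕ}
    (hsupp : ∀ d ∉ D, w d = 0) {d : ℕ} (hd : d ≠ 0) :
    lambdaSquared w d = ∑ a ∈ D, ∑ b ∈ D, if d = a.lcm b then w a * w b else 0 := by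
  rw [lambdaSquared, ← sum_product', ← sum_product']
  refine sum_congr_of_eq_on_inter ?_ ?_ fun _ _ _ => rfl
  · intro x _ hx
    have hzero : w x.1 * w x.2 = 0 := by
      rw [mem_product, not_and_or] at hx
      rcases hx with hx | hx <;> simp [hsupp _ hx]
    simp [hzero]
  · intro x _ hx
    refine if_neg fun hlcm => hx (mem_product.2 ⟨?_, ?_⟩)
    · exact Nat.mem_divisors.2 ⟨hlcm ▸ Nat.dvd_lcm_left x.1 x.2, hd⟩
    · exact Nat.mem_divisors.2 ⟨hlcm ▸ Nat.dvd_lcm_right x.1 x.2, hd⟩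

theorem errSum_lambdaSquared_le_sum_sum_abs_rem_lcm (s : BoundingSieve) {w : ℕ → ℝ}
    {D : Finset ℕ} (hsupp : ∀ d ∉ D, w d = 0) (hw : ∀ d, |w d| ≤ 1) :
    s.errSum (lambdaSquared w) ≤ ∑ a ∈ D, ∑ b ∈ D, |s.rem (a.lcm b)| := by
  have habs : ∀ d ∈ s.prodPrimes.divisors, |lambdaSquared w d| * |s.rem d| ≤
      ∑ a ∈ D, ∑ b ∈ D, if d = a.lcm b then |s.rem d| else 0 := by
    intro d hd
    rw [lambdaSquared_eq_sum_sum_of_support hsupp (Nat.pos_of_mem_divisors hd).ne']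
    calc |∑ a ∈ D, ∑ b ∈ D, if d = a.lcm b then w a * w b else 0| * |s.rem d|
        ≤ (∑ a ∈ D, ∑ b ∈ D, if d = a.lcm b then 1 else 0) * |s.rem d| := by
          gcongr
          refine (abs_sum_le_sum_abs _ _).trans (sum_le_sum fun a _ => ?_)
          refine (abs_sum_le_sum_abs _ _).trans (sum_le_sum fun b _ => ?_)
          split_ifs
          · rw [abs_mul]
            exact mul_le_one₀ (hw a) (abs_nonneg _) (hw b)
          · simp
      _ = ∑ a ∈ D, ∑ b ∈ D, if d = a.lcm b then |s.rem d| else 0 := by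
          simp only [sum_mul, ite_mul, one_mul, zero_mul]
  calc s.errSum (lambdaSquared w)
      ≤ ∑ d ∈ s.prodPrimes.divisors, ∑ a ∈ D, ∑ b ∈ D,
          if d = a.lcm b then |s.rem d| else 0 := sum_le_sum habs
    _ = ∑ a ∈ D, ∑ b ∈ D, if a.lcm b ∈ s.prodPrimes.divisors then |s.rem (a.lcm b)| else 0 := by
        rw [sum_comm]
        refine sum_congr rfl fun a _ => ?_
        rw [sum_comm]
        simp only [sum_ite_eq']
    _ ≤ ∑ a ∈ D, ∑ b ∈ D, |s.rem (a.lcm b)| := by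
        refine sum_le_sum fun a _ => sum_le_sum fun b _ => ?_
        split_ifs
        · exact le_rfl
        · exact abs_nonneg _

variable (s : SelbergSieve)

/-- The divisors `l ≤ √level` of the sifting product: the support of the Selberg weights. -/
noncomputable def selbergDivisors : Finset ℕ :=
  {l ∈ s.prodPrimes.divisors | (l : ℝ) ^ 2 ≤ s.level}

/-- Selberg's sum `S = ∑ g(l)` over the divisors `l ≤ √level` of the sifting product, where `g` is
`BoundingSieve.selbergTerms`; its inverse is the minimum of the quadratic form `∑ λ_a λ_b ν([a, b])`
subject to `λ_1 = 1`. -/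
noncomputable def selbergSum : ℝ := ∑ l ∈ selbergDivisors s, s.selbergTerms l

/-- Selberg's optimal weights `λ_d`, which minimise the main term of the `Λ²` sieve among the
weights supported on `d ≤ √level` with `λ_1 = 1`. -/
noncomputable def selbergWeight (d : ℕ) : ℝ :=
  μ d * (s.nu d)⁻¹ * (∑ l ∈ selbergDivisors s with d ∣ l, s.selbergTerms l) / selbergSum s

variable {s}

theorem dvd_prodPrimes_of_mem_selbergDivisors {l : ℕ} (hl : l ∈ selbergDivisors s) :
    l ∣ s.prodPrimes :=
  Nat.dvd_of_mem_divisors (mem_filter.1 hl).1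

theorem mem_selbergDivisors_of_dvd {k l : ℕ} (hl : l ∈ selbergDivisors s) (hkl : k ∣ l) :
    k ∈ selbergDivisors s := by
  obtain ⟨hlP, hl_level⟩ := mem_filter.1 hl
  have hle : k ≤ l := Nat.le_of_dvd (Nat.pos_of_mem_divisors hlP) hkl
  refine mem_filter.2 ⟨Nat.mem_divisors.2
    ⟨hkl.trans (Nat.dvd_of_mem_divisors hlP), prodPrimes_ne_zero⟩, le_trans ?_ hl_level⟩
  gcongr

theorem one_mem_selbergDivisors : 1 ∈ selbergDivisors s := by
  simp [selbergDivisors, prodPrimes_ne_zero, s.one_le_level]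

theorem selbergSum_pos : 0 < selbergSum s :=
  sum_pos (fun _ hl => selbergTerms_pos (dvd_prodPrimes_of_mem_selbergDivisors hl))
    ⟨1, one_mem_selbergDivisors⟩

theorem selbergWeight_one : selbergWeight s 1 = 1 := by
  simp only [selbergWeight, ArithmeticFunction.moebius_apply_one, s.nu_mult.map_one, one_dvd,
    filter_true, Int.cast_one, inv_one, one_mul]
  exact div_self selbergSum_pos.ne'

theorem selbergWeight_eq_zero {d : ℕ} (hd : d ∉ selbergDivisors s) : selbergWeight s d = 0 := by
  rw [selbergWeight, filter_false_of_mem fun l hl hdl => hd (mem_selbergDivisors_of_dvd hl hdl)]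
  simp

theorem selbergTerms_mul_sum_dvd_le {d k : ℕ} (hd : d ∣ s.prodPrimes) (hk : k ∣ d) :
    s.selbergTerms k * ∑ l ∈ selbergDivisors s with d ∣ l, s.selbergTerms l ≤
      s.selbergTerms d * ∑ j ∈ selbergDivisors s with d.gcd j = k, s.selbergTerms j := by
  have hd0 : 0 < d := Nat.pos_of_dvd_of_pos hd (Nat.pos_of_ne_zero prodPrimes_ne_zero)
  have hk0 : 0 < k := Nat.pos_of_dvd_of_pos hk hd0
  have hcop : ∀ m, d * m ∈ selbergDivisors s → d.Coprime m := fun m hm =>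
    Nat.coprime_of_squarefree_mul
      (squarefree_of_dvd_prodPrimes (dvd_prodPrimes_of_mem_selbergDivisors hm))
  have hterm : ∀ l ∈ selbergDivisors s, d ∣ l →
      s.selbergTerms k * s.selbergTerms l = s.selbergTerms d * s.selbergTerms (k * (l / d)) := by
    rintro _ hl ⟨m, rfl⟩
    rw [Nat.mul_div_cancel_left m hd0,
      selbergTerms_isMultiplicative.map_mul_of_coprime (hcop m hl),
      selbergTerms_isMultiplicative.map_mul_of_coprime ((hcop m hl).coprime_dvd_left hk)]
    ring
  have hinj : Set.InjOn (fun l => k * (l / d))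
      (({l ∈ selbergDivisors s | d ∣ l} : Finset ℕ) : Set ℕ) := by
    intro a ha b hb hab
    exact (Nat.div_left_inj (mem_filter.1 ha).2 (mem_filter.1 hb).2).1
      (Nat.eq_of_mul_eq_mul_left hk0 hab)
  have hsub : {l ∈ selbergDivisors s | d ∣ l}.image (fun l => k * (l / d)) ⊆
      {j ∈ selbergDivisors s | d.gcd j = k} := by
    intro j hj
    obtain ⟨l, hl, rfl⟩ := mem_image.1 hj
    obtain ⟨hl, m, rfl⟩ := mem_filter.1 hl
    simp only [Nat.mul_div_cancel_left m hd0]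
    refine mem_filter.2 ⟨mem_selbergDivisors_of_dvd hl (mul_dvd_mul_right hk m), ?_⟩
    rw [(hcop m hl).symm.gcd_mul_right_cancel_right k, Nat.gcd_eq_right hk]
  calc s.selbergTerms k * ∑ l ∈ selbergDivisors s with d ∣ l, s.selbergTerms l
      = s.selbergTerms d *
          ∑ l ∈ selbergDivisors s with d ∣ l, s.selbergTerms (k * (l / d)) := by
        rw [mul_sum, mul_sum]
        exact sum_congr rfl fun l hl => hterm l (mem_filter.1 hl).1 (mem_filter.1 hl).2
    _ ≤ s.selbergTerms d * ∑ j ∈ selbergDivisors s with d.gcd j = k, s.selbergTerms j := by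
        gcongr
        · exact (selbergTerms_pos hd).le
        rw [← sum_image (f := s.selbergTerms) hinj]
        exact sum_le_sum_of_subset_of_nonneg hsub fun j hj _ => (selbergTerms_pos
          (dvd_prodPrimes_of_mem_selbergDivisors (mem_filter.1 hj).1)).le

theorem inv_nu_mul_sum_dvd_le_selbergSum {d : ℕ} (hd : d ∣ s.prodPrimes) :
    (s.nu d)⁻¹ * ∑ l ∈ selbergDivisors s with d ∣ l, s.selbergTerms l ≤ selbergSum s := by
  have hd0 : d ≠ 0 := ne_zero_of_dvd_ne_zero prodPrimes_ne_zero hd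
  have hdivisors : ∑ k ∈ d.divisors, s.selbergTerms k = s.selbergTerms d * (s.nu d)⁻¹ := by
    rw [← sum_divisors_selbergTerms_eq_selbergTerms_mul_nu_inv hd, ← sum_filter,
      Nat.divisors_filter_dvd_of_dvd prodPrimes_ne_zero hd]
  have hfiber : ∑ k ∈ d.divisors, ∑ j ∈ selbergDivisors s with d.gcd j = k, s.selbergTerms j =
      selbergSum s :=
    sum_fiberwise_of_maps_to (fun j _ => Nat.mem_divisors.2 ⟨Nat.gcd_dvd_left d j, hd0⟩) _
  refine le_of_mul_le_mul_left ?_ (selbergTerms_pos hd)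
  rw [← mul_assoc, ← hdivisors, ← hfiber, sum_mul, mul_sum]
  exact sum_le_sum fun k hk => selbergTerms_mul_sum_dvd_le hd (Nat.dvd_of_mem_divisors hk)

theorem abs_selbergWeight_le_one (d : ℕ) : |selbergWeight s d| ≤ 1 := by
  by_cases hd : d ∈ selbergDivisors s
  · have hdP := dvd_prodPrimes_of_mem_selbergDivisors hd
    have hmoebius : |(μ d : ℝ)| ≤ 1 := by exact_mod_cast ArithmeticFunction.abs_moebius_le_one
    have hnonneg : 0 ≤ (s.nu d)⁻¹ * ∑ l ∈ selbergDivisors s with d ∣ l, s.selbergTerms l :=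
      mul_nonneg (inv_nonneg.2 (nu_pos_of_dvd_prodPrimes hdP).le) <| sum_nonneg fun l hl =>
        (selbergTerms_pos (dvd_prodPrimes_of_mem_selbergDivisors (mem_filter.1 hl).1)).le
    rw [selbergWeight, mul_assoc, abs_div, abs_mul, abs_of_nonneg hnonneg,
      abs_of_pos selbergSum_pos, div_le_one selbergSum_pos]
    exact (mul_le_of_le_one_left hnonneg hmoebius).trans
      (inv_nu_mul_sum_dvd_le_selbergSum hdP)
  · simp [selbergWeight_eq_zero hd]

theorem sum_nu_mul_selbergWeight (l : ℕ) :
    ∑ d ∈ s.prodPrimes.divisors, (if l ∣ d then s.nu d * selbergWeight s d else 0) =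
      if l ∈ selbergDivisors s then μ l * s.selbergTerms l / selbergSum s else 0 := by
  have hinner : ∀ m ∈ selbergDivisors s,
      ∑ d ∈ s.prodPrimes.divisors, (if l ∣ d ∧ d ∣ m then (μ d : ℝ) else 0) =
        if l = m then (μ m : ℝ) else 0 := by
    intro m hm
    have hmP := dvd_prodPrimes_of_mem_selbergDivisors hm
    have h := sum_divisors_filter_dvd_moebius (l := l) (squarefree_of_dvd_prodPrimes hmP)
    rw [← Nat.divisors_filter_dvd_of_dvd prodPrimes_ne_zero hmP, filter_filter] at h
    rw [← sum_filter]
    simp only [and_comm (a := l ∣ _)]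
    exact_mod_cast h
  calc ∑ d ∈ s.prodPrimes.divisors, (if l ∣ d then s.nu d * selbergWeight s d else 0)
      = ∑ d ∈ s.prodPrimes.divisors, ∑ m ∈ selbergDivisors s,
          (if l ∣ d ∧ d ∣ m then (μ d : ℝ) else 0) * (s.selbergTerms m / selbergSum s) := by
        refine sum_congr rfl fun d hd => ?_
        have hnu := nu_ne_zero (s := s.toBoundingSieve) (Nat.dvd_of_mem_divisors hd)
        by_cases hld : l ∣ d
        · simp only [hld, true_and, if_true, ite_mul, zero_mul, ← sum_filter, selbergWeight]
          rw [← mul_sum, ← sum_div]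
          field_simp
        · simp [hld]
    _ = ∑ m ∈ selbergDivisors s,
          (if l = m then (μ m : ℝ) else 0) * (s.selbergTerms m / selbergSum s) := by
        rw [sum_comm]
        exact sum_congr rfl fun m hm => by rw [← sum_mul, hinner m hm]
    _ = _ := by simp only [ite_mul, zero_mul, sum_ite_eq, mul_div_assoc]

theorem mainSum_lambdaSquared_selbergWeight :
    s.mainSum (lambdaSquared (selbergWeight s)) = (selbergSum s)⁻¹ := by
  have hterm : ∀ l ∈ selbergDivisors s,
      (s.selbergTerms l)⁻¹ * (μ l * s.selbergTerms l / selbergSum s) ^ 2 =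
        s.selbergTerms l * (selbergSum s ^ 2)⁻¹ := by
    intro l hl
    have hlP := dvd_prodPrimes_of_mem_selbergDivisors hl
    have hg := (selbergTerms_pos hlP).ne'
    have hmu : (μ l : ℝ) ^ 2 = 1 := by
      exact_mod_cast ArithmeticFunction.moebius_sq_eq_one_of_squarefree
        (squarefree_of_dvd_prodPrimes hlP)
    rw [div_pow, mul_pow, hmu]
    field_simp
  rw [mainSum_lambdaSquared_eq_sum_mul_sum_sq]
  simp only [sum_nu_mul_selbergWeight, ite_pow, mul_ite, ne_eq, OfNat.ofNat_ne_zero,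
    not_false_eq_true, zero_pow, mul_zero]
  have hsub : selbergDivisors s ⊆ s.prodPrimes.divisors := filter_subset _ _
  rw [← sum_filter, filter_mem_eq_inter, inter_eq_right.2 hsub,
    sum_congr rfl hterm, ← sum_mul, ← selbergSum, sq, mul_inv,
    mul_inv_cancel_left₀ selbergSum_pos.ne']

theorem siftedSum_le_totalMass_div_selbergSum_add :
    s.siftedSum ≤ s.totalMass / selbergSum s +
      ∑ a ∈ selbergDivisors s, ∑ b ∈ selbergDivisors s, |s.rem (a.lcm b)| := by
  have h := siftedSum_le_mainSum_errSum_of_upperMoebius (s := s.toBoundingSieve) _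
    (upperMoebius_lambdaSquared (selbergWeight s) selbergWeight_one)
  rw [mainSum_lambdaSquared_selbergWeight, ← div_eq_mul_inv] at h
  exact h.trans <| add_le_add_right (errSum_lambdaSquared_le_sum_sum_abs_rem_lcm _
    (fun _ => selbergWeight_eq_zero) abs_selbergWeight_le_one) _

end SelbergSieve

section Totient

open Finset

/-- The arithmetic function `m ↦ 1 / m`. -/
noncomputable def reciprocal : ArithmeticFunction ℝ := ⟨fun m => (m : ℝ)⁻¹, by simp⟩

theorem reciprocal_apply (m : ℕ) : reciprocal m = (m : ℝ)⁻¹ := rfl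

theorem isMultiplicative_reciprocal : reciprocal.IsMultiplicative :=
  ⟨by simp [reciprocal_apply], fun _ => by simp [reciprocal_apply, mul_comm]⟩

theorem harmonic_eq_sum_Ioc (n : ℕ) : (harmonic n : ℝ) = ∑ m ∈ Ioc 0 n, (m : ℝ)⁻¹ := by
  rw [harmonic_eq_sum_Icc]
  push_cast
  rfl

theorem cast_totient_eq_mul_prod_factors (d : ℕ) :
    (d.totient : ℝ) = d * ∏ p ∈ d.primeFactors, (1 - (p : ℝ)⁻¹) := by
  have h := congrArg (Rat.cast : ℚ → ℝ) (Nat.totient_eq_mul_prod_factors d)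
  push_cast at h
  exact h

theorem sum_inv_le_of_primeFactors_subset {N : ℕ} (hN : N ≠ 0) {K : Finset ℕ}
    (hK : ∀ k ∈ K, k ≠ 0 ∧ k.primeFactors ⊆ N.primeFactors) :
    ∑ k ∈ K, (k : ℝ)⁻¹ ≤ N / N.totient := by
  let f : ℕ →* ℝ :=
    { toFun := fun k => (k : ℝ)⁻¹
      map_one' := by simp
      map_mul' := fun a b => by simp [mul_comm] }
  have hf : ∀ {p : ℕ}, p.Prime → ‖f p‖ < 1 := fun {p} hp => by
    have hp_one : (1 : ℝ) < p := by exact_mod_cast hp.one_lt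
    simpa [f] using inv_lt_one_of_one_lt₀ hp_one
  have heuler := (EulerProduct.summable_and_hasSum_factoredNumbers_prod_filter_prime_geometric
    hf N.primeFactors).2
  have hmem : ∀ k ∈ K, k ∈ Nat.factoredNumbers N.primeFactors := fun k hk =>
    Nat.mem_factoredNumbers_of_primeFactors_subset (hK k hk).1 (hK k hk).2
  have hle := sum_le_hasSum (K.subtype (· ∈ Nat.factoredNumbers N.primeFactors))
    (fun k _ => inv_nonneg.2 (Nat.cast_nonneg (k : ℕ))) heuler
  rw [sum_subtype_of_mem (fun k => f k) hmem,
    filter_true_of_mem fun p hp => Nat.prime_of_mem_primeFactors hp, prod_inv_distrib] at hle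
  have hN0 : (N : ℝ) ≠ 0 := Nat.cast_ne_zero.2 hN
  rwa [cast_totient_eq_mul_prod_factors, ← div_div, div_self hN0, one_div]

theorem prod_Icc_one_sub_inv_sq {M : ℕ} (hM : 1 ≤ M) :
    ∏ j ∈ Icc 2 M, (1 - ((j : ℝ) ^ 2)⁻¹) = (M + 1) / (2 * M) := by
  induction M, hM using Nat.le_induction with
  | base => norm_num
  | succ M hM ih =>
    rw [prod_Icc_succ_top (by lia), ih]
    have hM0 : (M : ℝ) ≠ 0 := by positivity
    push_cast
    field_simp
    ring

theorem one_half_le_prod_one_sub_inv_sq {s : Finset ℕ} (hs : ∀ j ∈ s, 2 ≤ j) :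
    1 / 2 ≤ ∏ j ∈ s, (1 - ((j : ℝ) ^ 2)⁻¹) := by
  have hnonneg : ∀ j : ℕ, 2 ≤ j → 0 ≤ 1 - ((j : ℝ) ^ 2)⁻¹ := fun j hj =>
    sub_nonneg.2 <| inv_le_one_of_one_le₀ <| one_le_pow₀ <| Nat.one_le_cast.2 <| by lia
  set M := s.sup id + 1
  have hsub : s ⊆ Icc 2 M := fun j hj =>
    mem_Icc.2 ⟨hs j hj, (le_sup (f := id) hj).trans (Nat.le_succ _)⟩
  have hM : (0 : ℝ) < M := by positivity
  calc (1 / 2 : ℝ) ≤ (M + 1) / (2 * M) := by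
        rw [div_le_div_iff₀ two_pos (mul_pos two_pos hM)]
        linarith
    _ = ∏ j ∈ Icc 2 M, (1 - ((j : ℝ) ^ 2)⁻¹) := (prod_Icc_one_sub_inv_sq (by lia)).symm
    _ ≤ ∏ j ∈ s, (1 - ((j : ℝ) ^ 2)⁻¹) :=
        prod_le_prod_of_subset_of_le_one hsub (fun j hj => hnonneg j (mem_Icc.1 hj).1)
          fun j _ _ => sub_le_self _ (by positivity)

theorem prod_one_add_inv_le_sum_divisors_inv {d : ℕ} (hd : d ≠ 0) :
    ∏ p ∈ d.primeFactors, (1 + (p : ℝ)⁻¹) ≤ ∑ l ∈ d.divisors, (l : ℝ)⁻¹ := by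
  have hprod := isMultiplicative_reciprocal.prodPrimeFactors_one_add_of_squarefree
    (UniqueFactorizationMonoid.squarefree_radical (a := d))
  rw [Nat.primeFactors_radical] at hprod
  exact hprod.trans_le <| sum_le_sum_of_subset_of_nonneg
    (Nat.divisors_subset_of_dvd hd UniqueFactorizationMonoid.radical_dvd_self)
    fun l _ _ => inv_nonneg.2 (Nat.cast_nonneg l)

theorem inv_totient_le_two_mul_inv_mul_sum_divisors_inv {d : ℕ} (hd : d ≠ 0) :
    (d.totient : ℝ)⁻¹ ≤ 2 * ((d : ℝ)⁻¹ * ∑ l ∈ d.divisors, (l : ℝ)⁻¹) := by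
  set A := ∏ p ∈ d.primeFactors, (1 - (p : ℝ)⁻¹)
  have hA : 0 < A := prod_pos fun p hp => sub_pos.2 <| inv_lt_one_of_one_lt₀ <|
    Nat.one_lt_cast.2 (Nat.prime_of_mem_primeFactors hp).one_lt
  have hhalf : 1 / 2 ≤ A * ∑ l ∈ d.divisors, (l : ℝ)⁻¹ := by
    calc (1 / 2 : ℝ) ≤ ∏ p ∈ d.primeFactors, (1 - ((p : ℝ) ^ 2)⁻¹) :=
          one_half_le_prod_one_sub_inv_sq fun p hp => (Nat.prime_of_mem_primeFactors hp).two_le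
      _ = A * ∏ p ∈ d.primeFactors, (1 + (p : ℝ)⁻¹) := by
          rw [← prod_mul_distrib]
          exact prod_congr rfl fun p _ => by ring
      _ ≤ A * ∑ l ∈ d.divisors, (l : ℝ)⁻¹ := by
          gcongr
          exact prod_one_add_inv_le_sum_divisors_inv hd
  calc (d.totient : ℝ)⁻¹ = (d : ℝ)⁻¹ * A⁻¹ := by
        rw [cast_totient_eq_mul_prod_factors, mul_inv]
    _ ≤ (d : ℝ)⁻¹ * (2 * ∑ l ∈ d.divisors, (l : ℝ)⁻¹) := by
        gcongr
        rw [inv_le_iff_one_le_mul₀' hA]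
        linarith
    _ = 2 * ((d : ℝ)⁻¹ * ∑ l ∈ d.divisors, (l : ℝ)⁻¹) := by ring

theorem sum_Ioc_inv_mul_sum_divisors_inv_le (N : ℕ) :
    ∑ d ∈ Ioc 0 N, (d : ℝ)⁻¹ * ∑ l ∈ d.divisors, (l : ℝ)⁻¹ ≤ 2 * harmonic N := by
  have hconv : ∀ d ∈ Ioc 0 N, (d : ℝ)⁻¹ * ∑ l ∈ d.divisors, (l : ℝ)⁻¹ =
      (reciprocal.pmul reciprocal * reciprocal) d := by
    intro d hd
    have hd0 : (d : ℝ) ≠ 0 := Nat.cast_ne_zero.2 (mem_Ioc.1 hd).1.ne'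
    rw [ArithmeticFunction.mul_apply, Nat.sum_divisorsAntidiagonal
      fun a b => (reciprocal.pmul reciprocal) a * reciprocal b, mul_sum]
    refine sum_congr rfl fun l hl => ?_
    have hl0 : (l : ℝ) ≠ 0 := Nat.cast_ne_zero.2 (Nat.pos_of_mem_divisors hl).ne'
    rw [ArithmeticFunction.pmul_apply]
    simp only [reciprocal_apply]
    rw [Nat.cast_div (Nat.dvd_of_mem_divisors hl) hl0]
    field_simp
  have hsq : ∑ l ∈ Ioc 0 N, ((l : ℝ) ^ 2)⁻¹ ≤ 2 := by
    simpa [← Finset.Ioo_add_one_right_eq_Ioc] using sum_Ioo_inv_sq_le (α := ℝ) 0 (N + 1)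
  calc ∑ d ∈ Ioc 0 N, (d : ℝ)⁻¹ * ∑ l ∈ d.divisors, (l : ℝ)⁻¹
      = ∑ l ∈ Ioc 0 N, ((l : ℝ) ^ 2)⁻¹ * ∑ m ∈ Ioc 0 (N / l), (m : ℝ)⁻¹ := by
        rw [sum_congr rfl hconv, ArithmeticFunction.sum_Ioc_mul_eq_sum_sum]
        simp only [ArithmeticFunction.pmul_apply, reciprocal_apply, sq, mul_inv]
    _ ≤ ∑ l ∈ Ioc 0 N, ((l : ℝ) ^ 2)⁻¹ * harmonic N := by
        gcongr with l
        rw [harmonic_eq_sum_Ioc]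
        exact sum_le_sum_of_subset_of_nonneg (Ioc_subset_Ioc_right (Nat.div_le_self N l))
          fun _ _ _ => by positivity
    _ ≤ 2 * harmonic N := by
        rw [← sum_mul]
        gcongr
        rw [harmonic_eq_sum_Ioc]
        positivity

theorem sum_Ioc_inv_totient_le (N : ℕ) :
    ∑ d ∈ Ioc 0 N, (d.totient : ℝ)⁻¹ ≤ 4 * harmonic N := by
  calc ∑ d ∈ Ioc 0 N, (d.totient : ℝ)⁻¹
      ≤ ∑ d ∈ Ioc 0 N, 2 * ((d : ℝ)⁻¹ * ∑ l ∈ d.divisors, (l : ℝ)⁻¹) :=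
        sum_le_sum fun d hd =>
          inv_totient_le_two_mul_inv_mul_sum_divisors_inv (mem_Ioc.1 hd).1.ne'
    _ ≤ 4 * harmonic N := by
        rw [← mul_sum]
        linarith [sum_Ioc_inv_mul_sum_divisors_inv_le N]

theorem harmonic_le_three_mul_harmonic {N z : ℕ} (hz : 1 ≤ z) (hN : N ≤ (z + 1) ^ 2) :
    (harmonic N : ℝ) ≤ 3 * harmonic z := by
  have hupper := harmonic_le_one_add_log N
  have hlower := log_add_one_le_harmonic z
  have hone : (1 : ℝ) ≤ harmonic z := by
    rw [harmonic_eq_sum_Ioc]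
    simpa using single_le_sum (f := fun m : ℕ => (m : ℝ)⁻¹) (fun m _ => by positivity)
      (mem_Ioc.2 ⟨one_pos, hz⟩)
  have hlog : Real.log N ≤ 2 * Real.log ((z + 1 : ℕ) : ℝ) := by
    rcases N.eq_zero_or_pos with rfl | hN0
    · simpa using Real.log_nonneg (by linarith)
    · rw [← Nat.cast_two, ← Real.log_pow]
      exact Real.log_le_log (Nat.cast_pos.2 hN0) (by exact_mod_cast hN)
  linarith

theorem sum_Ioc_filter_gcd_eq_inv_le {P d z l : ℕ} (hd : d ≠ 0) (hPd : P.Coprime d)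
    (hprimes : ∀ p, p.Prime → p ≤ z → p ∣ P ∨ p ∣ d) (hlP : l ∣ P) (hl : l ≠ 0) :
    ∑ k ∈ Ioc 0 z with k.gcd P = l, (k : ℝ)⁻¹ ≤ d / d.totient * (l.totient : ℝ)⁻¹ := by
  set K := {k ∈ Ioc 0 z | k.gcd P = l}
  have hgcd : ∀ k ∈ K, k.gcd P = l := fun k hk => (mem_filter.1 hk).2
  have hdvd : ∀ k ∈ K, l ∣ k := fun k hk => hgcd k hk ▸ Nat.gcd_dvd_left k P
  have hl0 : (l : ℝ) ≠ 0 := Nat.cast_ne_zero.2 hl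
  have hinj : Set.InjOn (· / l) (K : Set ℕ) := fun a ha b hb hab =>
    (Nat.div_left_inj (hdvd a ha) (hdvd b hb)).1 hab
  have hquot : ∀ m ∈ K.image (· / l), m ≠ 0 ∧ m.primeFactors ⊆ (d * l).primeFactors := by
    intro m hm
    obtain ⟨k, hk, rfl⟩ := mem_image.1 hm
    obtain ⟨hk0, hkz⟩ := mem_Ioc.1 (mem_filter.1 hk).1
    refine ⟨(Nat.div_pos (Nat.le_of_dvd hk0 (hdvd k hk)) (Nat.pos_of_ne_zero hl)).ne', ?_⟩
    intro p hp
    obtain ⟨hp, hpm, -⟩ := Nat.mem_primeFactors.1 hp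
    have hpk : p ∣ k := hpm.trans (Nat.div_dvd_of_dvd (hdvd k hk))
    refine Nat.mem_primeFactors.2 ⟨hp, ?_, mul_ne_zero hd hl⟩
    rcases hprimes p hp ((Nat.le_of_dvd hk0 hpk).trans hkz) with hpP | hpd
    · exact (hgcd k hk ▸ Nat.dvd_gcd hpk hpP).mul_left d
    · exact hpd.mul_right l
  calc ∑ k ∈ K, (k : ℝ)⁻¹ = (l : ℝ)⁻¹ * ∑ m ∈ K.image (· / l), (m : ℝ)⁻¹ := by
        rw [sum_image hinj, mul_sum]
        refine sum_congr rfl fun k hk => ?_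
        rw [Nat.cast_div (hdvd k hk) hl0, inv_div, div_eq_mul_inv, inv_mul_cancel_left₀ hl0]
    _ ≤ (l : ℝ)⁻¹ * ((d * l : ℕ) / (d * l).totient) := by
        gcongr
        exact sum_inv_le_of_primeFactors_subset (mul_ne_zero hd hl) hquot
    _ = d / d.totient * (l.totient : ℝ)⁻¹ := by
        rw [Nat.totient_mul (hPd.symm.coprime_dvd_right hlP)]
        push_cast
        field_simp

theorem harmonic_le_mul_sum_inv_totient {P d z : ℕ} (hP : P ≠ 0) (hd : d ≠ 0)
    (hPd : P.Coprime d) (hprimes : ∀ p, p.Prime → p ≤ z → p ∣ P ∨ p ∣ d) :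
    (harmonic z : ℝ) ≤
      d / d.totient * ∑ l ∈ P.divisors with l ≤ z, (l.totient : ℝ)⁻¹ := by
  have hmaps : ∀ k ∈ Ioc 0 z, k.gcd P ∈ {l ∈ P.divisors | l ≤ z} := fun k hk =>
    mem_filter.2 ⟨Nat.mem_divisors.2 ⟨Nat.gcd_dvd_right k P, hP⟩,
      (Nat.gcd_le_left P (mem_Ioc.1 hk).1).trans (mem_Ioc.1 hk).2⟩
  rw [harmonic_eq_sum_Ioc, ← sum_fiberwise_of_maps_to hmaps, mul_sum]
  refine sum_le_sum fun l hl => ?_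
  have hlP := Nat.dvd_of_mem_divisors (mem_filter.1 hl).1
  exact sum_Ioc_filter_gcd_eq_inv_le hd hPd hprimes hlP (ne_zero_of_dvd_ne_zero hP hlP)

end Totient

section Hyperbola

open Finset

theorem card_divisors_le_two_mul_card_Ioc_filter_dvd {m N : ℕ} (hm : m ≠ 0)
    (hN : m < (N + 1) ^ 2) : #m.divisors ≤ 2 * #{d ∈ Ioc 0 N | d ∣ m} := by
  set D := {d ∈ Ioc 0 N | d ∣ m}
  have hsub : m.divisors ⊆ D ∪ D.image fun d => m / d := by
    intro e he
    obtain ⟨f, rfl⟩ := Nat.dvd_of_mem_divisors he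
    have he0 : 0 < e := Nat.pos_of_ne_zero (left_ne_zero_of_mul hm)
    have hf0 : 0 < f := Nat.pos_of_ne_zero (right_ne_zero_of_mul hm)
    rcases le_or_gt e N with heN | heN
    · exact mem_union_left _ (mem_filter.2 ⟨mem_Ioc.2 ⟨he0, heN⟩, dvd_mul_right e f⟩)
    · have hfN : f ≤ N := by
        by_contra! hfN
        nlinarith
      exact mem_union_right _ (mem_image.2 ⟨f, mem_filter.2
        ⟨mem_Ioc.2 ⟨hf0, hfN⟩, dvd_mul_left f e⟩, Nat.mul_div_cancel e hf0⟩)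
  calc #m.divisors ≤ #D + #(D.image fun d => m / d) := (card_le_card hsub).trans (card_union_le _ _)
    _ ≤ #D + #D := by grw [card_image_le]
    _ = 2 * #D := (two_mul _).symm

theorem sum_card_divisors_sub_le {n : ℕ} {A : Finset ℕ} (hA : A ⊆ range n) :
    ∑ p ∈ A, #(n - p).divisors ≤ 2 * ∑ d ∈ Ioc 0 n.sqrt, #{p ∈ A | p ≡ n [MOD d]} := by
  have hlt : ∀ p ∈ A, p < n := fun p hp => mem_range.1 (hA hp)
  calc ∑ p ∈ A, #(n - p).divisors
      ≤ ∑ p ∈ A, 2 * #{d ∈ Ioc 0 n.sqrt | d ∣ n - p} :=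
        sum_le_sum fun p hp => card_divisors_le_two_mul_card_Ioc_filter_dvd
          (Nat.sub_ne_zero_of_lt (hlt p hp)) ((Nat.sub_le n p).trans_lt (Nat.lt_succ_sqrt' n))
    _ = 2 * ∑ d ∈ Ioc 0 n.sqrt, #{p ∈ A | d ∣ n - p} := by
        rw [← mul_sum]
        exact congrArg (2 * ·)
          (sum_card_bipartiteAbove_eq_sum_card_bipartiteBelow fun p d => d ∣ n - p)
    _ = 2 * ∑ d ∈ Ioc 0 n.sqrt, #{p ∈ A | p ≡ n [MOD d]} := by
        refine congrArg (2 * ·) (sum_congr rfl fun d _ => congrArg card ?_)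
        exact filter_congr fun p hp => (Nat.modEq_iff_dvd' (hlt p hp).le).symm

end Hyperbola

section ResidueClassSieve

open Finset

theorem abs_card_range_filter_modEq_sub_le (n c : ℕ) {r : ℕ} (hr : 0 < r) :
    |(#{m ∈ range n | m ≡ c [MOD r]} : ℝ) - n / r| ≤ 1 := by
  have hle : ((n / r : ℕ) : ℝ) ≤ n / r := Nat.cast_div_le
  have hlt : (n / r : ℝ) < (n / r : ℕ) + 1 := by
    rw [← Nat.floor_div_eq_div (K := ℝ)]
    exact Nat.lt_floor_add_one _
  rw [← Nat.count_eq_card_filter_range, Nat.count_modEq_card n hr, abs_le]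
  push_cast
  split_ifs <;> constructor <;> linarith

theorem abs_card_range_filter_modEq_and_dvd_sub_le (n a : ℕ) {d k : ℕ} (hd : 0 < d) (hk : 0 < k)
    (hdk : d.Coprime k) :
    |(#{m ∈ range n | m ≡ a [MOD d] ∧ k ∣ m} : ℝ) - n / (d * k)| ≤ 1 := by
  obtain ⟨c, hcd, hck⟩ := Nat.chineseRemainder hdk a 0
  have hmod : ∀ m, m ≡ a [MOD d] ∧ k ∣ m ↔ m ≡ c [MOD d * k] := fun m => by
    rw [← Nat.modEq_and_modEq_iff_modEq_mul hdk, ← Nat.modEq_zero_iff_dvd]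
    exact and_congr ⟨(·.trans hcd.symm), (·.trans hcd)⟩ ⟨(·.trans hck.symm), (·.trans hck)⟩
  simp only [hmod]
  exact_mod_cast abs_card_range_filter_modEq_sub_le n c (Nat.mul_pos hd hk)

/-- The product of the primes `p ≤ z` that do not divide `d`. -/
def coprimePrimorial (d z : ℕ) : ℕ := primorial z / (primorial z).gcd d

theorem coprimePrimorial_mul_gcd (d z : ℕ) :
    coprimePrimorial d z * (primorial z).gcd d = primorial z :=
  Nat.div_mul_cancel (Nat.gcd_dvd_left _ _)

theorem squarefree_coprimePrimorial (d z : ℕ) : Squarefree (coprimePrimorial d z) :=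
  (squarefree_primorial z).squarefree_of_dvd (Dvd.intro _ (coprimePrimorial_mul_gcd d z))

theorem coprime_coprimePrimorial {d : ℕ} (hd : d ≠ 0) (z : ℕ) : (coprimePrimorial d z).Coprime d :=
  Nat.coprime_div_gcd_of_squarefree (squarefree_primorial z) hd

theorem dvd_coprimePrimorial_or_dvd (d : ℕ) {p z : ℕ} (hp : p.Prime) (hpz : p ≤ z) :
    p ∣ coprimePrimorial d z ∨ p ∣ d := by
  rw [← hp.dvd_primorial_iff, ← coprimePrimorial_mul_gcd d z, hp.dvd_mul] at hpz
  exact hpz.imp_right (·.trans (Nat.gcd_dvd_right _ _))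

theorem prime_le_of_dvd_coprimePrimorial {d p z : ℕ} (hp : p.Prime)
    (hdvd : p ∣ coprimePrimorial d z) : p ≤ z :=
  hp.dvd_primorial_iff.1 (hdvd.trans (Dvd.intro _ (coprimePrimorial_mul_gcd d z)))

/-- The Selberg sieve of level `z²` that removes from the residue class `a` modulo `d`, cut off at
`n`, the multiples of the primes `p ≤ z` not dividing `d`. -/
noncomputable def residueClassSieve (n a d : ℕ) {z : ℕ} (hz : 1 ≤ z) : SelbergSieve where
  support := {m ∈ range n | m ≡ a [MOD d]}
  prodPrimes := coprimePrimorial d z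
  prodPrimes_squarefree := squarefree_coprimePrimorial d z
  weights _ := 1
  weights_nonneg _ := zero_le_one
  totalMass := n / d
  nu := reciprocal
  nu_mult := isMultiplicative_reciprocal
  nu_pos_of_prime _ hp _ := inv_pos.2 (Nat.cast_pos.2 hp.pos)
  nu_lt_one_of_prime _ hp _ := inv_lt_one_of_one_lt₀ (Nat.one_lt_cast.2 hp.one_lt)
  level := z ^ 2
  one_le_level := one_le_pow₀ (Nat.one_le_cast.2 hz)

variable (n a : ℕ) {d z : ℕ} (hz : 1 ≤ z)

theorem selbergDivisors_residueClassSieve :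
    selbergDivisors (residueClassSieve n a d hz) =
      {l ∈ (coprimePrimorial d z).divisors | l ≤ z} :=
  filter_congr fun l _ => by
    simp only [residueClassSieve]
    rw [sq_le_sq₀ l.cast_nonneg z.cast_nonneg, Nat.cast_le]

theorem card_selbergDivisors_residueClassSieve_le :
    #(selbergDivisors (residueClassSieve n a d hz)) ≤ z := by
  have hsub : selbergDivisors (residueClassSieve n a d hz) ⊆ Ioc 0 z := fun l hl => by
    rw [selbergDivisors_residueClassSieve] at hl
    obtain ⟨hl, hlz⟩ := mem_filter.1 hl
    exact mem_Ioc.2 ⟨Nat.pos_of_mem_divisors hl, hlz⟩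
  simpa using card_le_card hsub

theorem selbergTerms_residueClassSieve (l : ℕ) :
    (residueClassSieve n a d hz).selbergTerms l = (l.totient : ℝ)⁻¹ := by
  rw [BoundingSieve.selbergTerms_apply, cast_totient_eq_mul_prod_factors, mul_inv,
    ← prod_inv_distrib]
  rfl

theorem harmonic_le_mul_selbergSum_residueClassSieve (hd : d ≠ 0) :
    (harmonic z : ℝ) ≤ d / d.totient * selbergSum (residueClassSieve n a d hz) := by
  simp only [selbergSum, selbergTerms_residueClassSieve, selbergDivisors_residueClassSieve]
  exact harmonic_le_mul_sum_inv_totient (squarefree_coprimePrimorial d z).ne_zero hd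
    (coprime_coprimePrimorial hd z) fun p => dvd_coprimePrimorial_or_dvd d

theorem abs_rem_residueClassSieve_le_one (hd : d ≠ 0) {k : ℕ} (hk : k ∣ coprimePrimorial d z) :
    |(residueClassSieve n a d hz).rem k| ≤ 1 := by
  have hk0 : k ≠ 0 := ne_zero_of_dvd_ne_zero (squarefree_coprimePrimorial d z).ne_zero hk
  have hdk : d.Coprime k := (coprime_coprimePrimorial hd z).symm.coprime_dvd_right hk
  convert abs_card_range_filter_modEq_and_dvd_sub_le n a (Nat.pos_of_ne_zero hd)
    (Nat.pos_of_ne_zero hk0) hdk using 2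
  rw [← filter_filter]
  simp only [BoundingSieve.rem, BoundingSieve.multSum, residueClassSieve, reciprocal_apply,
    sum_boole]
  rw [inv_mul_eq_div, div_div]

theorem sum_sum_abs_rem_lcm_residueClassSieve_le (hd : d ≠ 0) :
    ∑ b ∈ selbergDivisors (residueClassSieve n a d hz),
      ∑ c ∈ selbergDivisors (residueClassSieve n a d hz),
        |(residueClassSieve n a d hz).rem (b.lcm c)| ≤ z ^ 2 := by
  set D := selbergDivisors (residueClassSieve n a d hz)
  have hcard : (#D : ℝ) ≤ z := Nat.cast_le.2 (card_selbergDivisors_residueClassSieve_le n a hz)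
  calc ∑ b ∈ D, ∑ c ∈ D, |(residueClassSieve n a d hz).rem (b.lcm c)|
      ≤ ∑ _b ∈ D, ∑ _c ∈ D, (1 : ℝ) :=
        sum_le_sum fun b hb => sum_le_sum fun c hc =>
          abs_rem_residueClassSieve_le_one n a hz hd <| Nat.lcm_dvd
            (dvd_prodPrimes_of_mem_selbergDivisors hb) (dvd_prodPrimes_of_mem_selbergDivisors hc)
    _ = (#D : ℝ) ^ 2 := by simp [sq]
    _ ≤ (z : ℝ) ^ 2 := by gcongr

theorem card_primes_modEq_le_add_siftedSum (d : ℕ) :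
    (#{p ∈ range n | p.Prime ∧ p ≡ a [MOD d]} : ℝ) ≤
      z + (residueClassSieve n a d hz).siftedSum := by
  set B := {m ∈ range n | m ≡ a [MOD d] ∧ (coprimePrimorial d z).Coprime m}
  have hsub : {p ∈ range n | p.Prime ∧ p ≡ a [MOD d]} ⊆ Ioc 0 z ∪ B := by
    intro p hp
    obtain ⟨hpn, hp, hmod⟩ := mem_filter.1 hp
    rcases le_or_gt p z with hpz | hzp
    · exact mem_union_left _ (mem_Ioc.2 ⟨hp.pos, hpz⟩)
    · refine mem_union_right _ (mem_filter.2 ⟨hpn, hmod, ?_⟩)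
      rw [Nat.coprime_comm, hp.coprime_iff_not_dvd]
      exact fun hdvd => hzp.not_ge (prime_le_of_dvd_coprimePrimorial hp hdvd)
  have hcard : #{p ∈ range n | p.Prime ∧ p ≡ a [MOD d]} ≤ z + #B := by
    simpa using (card_le_card hsub).trans (card_union_le _ _)
  have hB : (residueClassSieve n a d hz).siftedSum = #B := by
    simp only [B]
    rw [← filter_filter, natCast_card_filter]
    rfl
  rw [hB]
  exact_mod_cast hcard

end ResidueClassSieve

section BrunTitchmarsh

open Finset

variable (n a : ℕ) {z : ℕ}

theorem card_primes_modEq_le {d : ℕ} (hd : d ≠ 0) (hz : 1 ≤ z) :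
    (#{p ∈ range n | p.Prime ∧ p ≡ a [MOD d]} : ℝ) ≤
      n / (d.totient * harmonic z) + (z ^ 2 + z) := by
  set s := residueClassSieve n a d hz
  have hφ : (0 : ℝ) < d.totient := Nat.cast_pos.2 (Nat.totient_pos.2 (Nat.pos_of_ne_zero hd))
  have hH : (0 : ℝ) < harmonic z := Rat.cast_pos.2 (harmonic_pos (by lia))
  have hmain : s.totalMass / selbergSum s ≤ n / (d.totient * harmonic z) := by
    calc s.totalMass / selbergSum s = n / (d * selbergSum s) := div_div _ _ _
      _ ≤ n / (d.totient * harmonic z) := by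
          have h := harmonic_le_mul_selbergSum_residueClassSieve n a hz hd
          rw [div_mul_eq_mul_div, le_div_iff₀' hφ] at h
          exact div_le_div_of_nonneg_left n.cast_nonneg (mul_pos hφ hH) h
  linarith [card_primes_modEq_le_add_siftedSum n a hz d,
    siftedSum_le_totalMass_div_selbergSum_add (s := s),
    sum_sum_abs_rem_lcm_residueClassSieve_le n a hz hd]

theorem sum_Ioc_card_primes_modEq_le {N : ℕ} (hz : 1 ≤ z) (hN : N ≤ (z + 1) ^ 2) :
    (∑ d ∈ Ioc 0 N, #{p ∈ range n | p.Prime ∧ p ≡ a [MOD d]} : ℝ) ≤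
      12 * n + N * (z ^ 2 + z) := by
  have hH : (0 : ℝ) < harmonic z := Rat.cast_pos.2 (harmonic_pos (by lia))
  have htotient : ∑ d ∈ Ioc 0 N, (d.totient : ℝ)⁻¹ ≤ 12 * harmonic z := by
    linarith [sum_Ioc_inv_totient_le N, harmonic_le_three_mul_harmonic hz hN]
  calc (∑ d ∈ Ioc 0 N, #{p ∈ range n | p.Prime ∧ p ≡ a [MOD d]} : ℝ)
      ≤ ∑ d ∈ Ioc 0 N, (n / harmonic z * (d.totient : ℝ)⁻¹ + (z ^ 2 + z)) :=
        sum_le_sum fun d hd => by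
          rw [← div_eq_mul_inv, div_div, mul_comm (harmonic z : ℝ)]
          exact card_primes_modEq_le n a (mem_Ioc.1 hd).1.ne' hz
    _ = n / harmonic z * ∑ d ∈ Ioc 0 N, (d.totient : ℝ)⁻¹ + N * (z ^ 2 + z) := by
        rw [sum_add_distrib, ← mul_sum, sum_const, Nat.card_Ioc, Nat.sub_zero, nsmul_eq_mul]
    _ ≤ n / harmonic z * (12 * harmonic z) + N * (z ^ 2 + z) := by gcongr
    _ = 12 * n + N * (z ^ 2 + z) := by field_simp

end BrunTitchmarsh

/-- There is an absolute constant `C > 0` such that for every `n ≥ 2`,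
`∑_{p prime, p < n} τ(n - p) ≤ C·n`, where `τ` is the number-of-divisors function. -/
theorem sum_divisors_shifted_primes_le :
    ∃ C : ℝ, 0 < C ∧ ∀ n : ℕ, 2 ≤ n →
      ((∑ p ∈ (Finset.range n).filter Nat.Prime, (n - p).divisors.card : ℕ) : ℝ) ≤ C * n := by
  refine ⟨28, by norm_num, fun n hn => ?_⟩
  set N := n.sqrt
  set z := N.sqrt
  have hz : 1 ≤ z := Nat.sqrt_pos.2 (Nat.sqrt_pos.2 (by lia))
  have hzN : z ^ 2 + z ≤ 2 * N := by
    linarith [Nat.le_self_pow two_ne_zero z, Nat.sqrt_le' N]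
  have hsum := sum_Ioc_card_primes_modEq_le n n hz (Nat.lt_succ_sqrt' N).le
  calc ((∑ p ∈ (Finset.range n).filter Nat.Prime, (n - p).divisors.card : ℕ) : ℝ)
      ≤ 2 * ∑ d ∈ Finset.Ioc 0 N, (((Finset.range n).filter
          fun p => p.Prime ∧ p ≡ n [MOD d]).card : ℝ) := by
        simp only [← Finset.filter_filter]
        exact_mod_cast sum_card_divisors_sub_le (Finset.filter_subset _ _)
    _ ≤ 2 * (12 * n + N * (2 * N)) := by
        grw [hsum]
        gcongr
        exact_mod_cast hzN
    _ ≤ 28 * n := by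
        have hNn : (N : ℝ) ^ 2 ≤ n := by exact_mod_cast Nat.sqrt_le' n
        linarith
end

section
/- Sieve upper bound for Goldbach representations: there exists an absolute constant C > 0 such that for every even integer m ≥ 4 and every real y with 4 ≤ y ≤ m, the number of integers j with 2 ≤ j ≤ y such that both j and m − j are prime is at most C·C(m)·y/(log y)². -/
open Real

/-- The singular series `C(n) = ∏_{p ∤ n} (1 - 1/(p-1)²) · ∏_{p ∣ n} (1 + 1/(p-1))`,
where both products run over primes. -/
noncomputable def singularSeries (n : ℕ) : ℝ :=
  (∏' p : {p : ℕ // p.Prime ∧ ¬ p ∣ n}, (1 - 1 / ((p : ℕ) - 1 : ℝ) ^ 2)) *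
    ∏ p ∈ n.primeFactors, (1 + 1 / ((p : ℝ) - 1))

/-!
If `j` and `m - j` are prime, then `j (m - j)` has no prime factor `≤ z` unless `j ≤ z` or
`|m - j| ≤ z`. Selberg's sieve, applied to the polynomial `X (m - X)`, which has one root modulo `p`
if `p ∣ m` and two otherwise, bounds the number of such `j ≤ Y` by `Y / S + z ^ 4`. For `z = N ^ 2`
the Selberg sum `S` dominates `∑_{n ≤ N ^ 2} h(n)`, where `h` is completely multiplicative with
`h(p) = 1 / p` for `p ∣ m` and `h(p) = 2 / p` otherwise. Since `n h(n)` is at least the number of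
ways of writing `n = a c` with `c` coprime to `m`, this sum is at least
`(∑_{a ≤ N} 1 / a) (∑_{c ≤ N, (c, m) = 1} 1 / c) ≥ (φ(m) / m) (log N) ^ 2`.

The factor `m / φ(m)` is exactly the finite product in the singular series. For even `m` the
infinite product omits `p = 2` and so is at least `∏_{k ≥ 2} (1 - 1 / k ^ 2) = 1 / 2`. Taking for
`N` the integer part of `y ^ (1 / 16)` makes the error terms negligible.
-/

namespace GoldbachSieve

open Finset

section SelbergWeights

open ArithmeticFunction BoundingSieve
open scoped ArithmeticFunction.Moebius

variable {s : BoundingSieve} {z d l : ℕ}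

/-- The denominator `S(z) = ∑_{l ∣ P, l ≤ z} g(l)` of the main term of Selberg's sieve. -/
noncomputable def selbergSum (s : BoundingSieve) (z : ℕ) : ℝ :=
  ∑ l ∈ s.prodPrimes.divisors with l ≤ z, s.selbergTerms l

/-- The weights minimising the main term of the `Λ²` sieve among those supported on `d ≤ z` and
equal to `1` at `d = 1`. -/
noncomputable def selbergWeights (s : BoundingSieve) (z d : ℕ) : ℝ :=
  μ d * (s.nu d)⁻¹ * (selbergSum s z)⁻¹ *
    ∑ l ∈ s.prodPrimes.divisors with l ≤ z, if d ∣ l then s.selbergTerms l else 0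

theorem selbergTerms_pos_of_mem (hl : l ∈ s.prodPrimes.divisors.filter (· ≤ z)) :
    0 < s.selbergTerms l :=
  selbergTerms_pos (Nat.dvd_of_mem_divisors (mem_filter.1 hl).1)

theorem selbergSum_pos (hz : 1 ≤ z) : 0 < selbergSum s z :=
  sum_pos (fun _ hl ↦ selbergTerms_pos_of_mem hl) ⟨1, by simp [hz, prodPrimes_ne_zero]⟩

theorem selbergWeights_one (hz : 1 ≤ z) : selbergWeights s z 1 = 1 := by
  simp only [selbergWeights, one_dvd, if_true, s.nu_mult.map_one, moebius_apply_one, Int.cast_one,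
    inv_one, one_mul]
  exact inv_mul_cancel₀ (selbergSum_pos hz).ne'

theorem selbergWeights_eq_zero_of_lt (hd : z < d) : selbergWeights s z d = 0 := by
  rw [selbergWeights, sum_eq_zero, mul_zero]
  intro l hl
  obtain ⟨hl, hlz⟩ := mem_filter.1 hl
  exact if_neg (Nat.not_dvd_of_pos_of_lt (Nat.pos_of_mem_divisors hl) (hlz.trans_lt hd))

theorem abs_selbergWeights_le (hz : 1 ≤ z) (hd : d ∣ s.prodPrimes) :
    |selbergWeights s z d| ≤ (s.nu d)⁻¹ := by
  have hS := selbergSum_pos (s := s) hz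
  have hν := nu_pos_of_dvd_prodPrimes hd
  have hμ : |(μ d : ℝ)| ≤ 1 := by exact_mod_cast abs_moebius_le_one
  set T := ∑ l ∈ s.prodPrimes.divisors with l ≤ z, if d ∣ l then s.selbergTerms l else 0 with hT
  have hT_nonneg : 0 ≤ T := sum_nonneg fun l hl ↦ by
    split_ifs
    exacts [(selbergTerms_pos_of_mem hl).le, le_rfl]
  have hT_le : T ≤ selbergSum s z := sum_le_sum fun l hl ↦ by
    split_ifs
    exacts [le_rfl, (selbergTerms_pos_of_mem hl).le]
  calc |selbergWeights s z d|
      = |(μ d : ℝ)| * (s.nu d)⁻¹ * (selbergSum s z)⁻¹ * T := by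
        rw [selbergWeights, ← hT, abs_mul, abs_mul, abs_mul, abs_of_nonneg hT_nonneg,
          abs_of_pos (inv_pos.2 hν), abs_of_pos (inv_pos.2 hS)]
    _ ≤ 1 * (s.nu d)⁻¹ * (selbergSum s z)⁻¹ * selbergSum s z := by gcongr
    _ = (s.nu d)⁻¹ := by field_simp

theorem sum_moebius_divisors (n : ℕ) : ∑ d ∈ n.divisors, μ d = if n = 1 then 1 else 0 := by
  rw [← coe_mul_zeta_apply, moebius_mul_coe_zeta, one_apply]

theorem sum_moebius_divisors_filter_dvd {k : ℕ} (hk : Squarefree k) :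
    ∑ d ∈ k.divisors with l ∣ d, μ d = if k = l then μ l else 0 := by
  by_cases hl : l ∣ k
  · obtain ⟨e, rfl⟩ := hl
    have hl_pos : 0 < l := Nat.pos_of_ne_zero (left_ne_zero_of_mul hk.ne_zero)
    have hcop : l.Coprime e := (Nat.squarefree_mul_iff.1 hk).1
    have hdiv : {d ∈ (l * e).divisors | l ∣ d} = e.divisors.image (l * ·) := by
      ext d
      simp only [mem_filter, Nat.mem_divisors, mem_image]
      constructor
      · rintro ⟨⟨h, -⟩, c, rfl⟩
        exact ⟨c, ⟨(Nat.mul_dvd_mul_iff_left hl_pos).1 h, right_ne_zero_of_mul hk.ne_zero⟩, rfl⟩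
      · rintro ⟨c, ⟨h, -⟩, rfl⟩
        exact ⟨⟨mul_dvd_mul_left l h, hk.ne_zero⟩, dvd_mul_right l c⟩
    calc ∑ d ∈ (l * e).divisors with l ∣ d, μ d = ∑ c ∈ e.divisors, μ (l * c) := by
          rw [hdiv, sum_image fun a _ b _ h ↦ Nat.eq_of_mul_eq_mul_left hl_pos h]
      _ = ∑ c ∈ e.divisors, μ l * μ c := sum_congr rfl fun c hc ↦
          isMultiplicative_moebius.map_mul_of_coprime
            (hcop.coprime_dvd_right (Nat.dvd_of_mem_divisors hc))
      _ = if l * e = l then μ l else 0 := by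
          rw [← mul_sum, sum_moebius_divisors, mul_ite, mul_one, mul_zero]
          simp only [Nat.mul_eq_left hl_pos.ne']
  · rw [if_neg fun h ↦ hl h.symm.dvd, sum_eq_zero]
    intro d hd
    simp only [mem_filter, Nat.mem_divisors] at hd
    exact absurd (hd.2.trans hd.1.1) hl

theorem nu_mul_selbergWeights (hd : d ∣ s.prodPrimes) :
    s.nu d * selbergWeights s z d = (selbergSum s z)⁻¹ *
      ∑ k ∈ s.prodPrimes.divisors with k ≤ z, if d ∣ k then μ d * s.selbergTerms k else 0 := by
  have hν := nu_ne_zero hd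
  simp only [selbergWeights, ← mul_ite_zero, ← mul_sum]
  field_simp

theorem sum_nu_mul_selbergWeights (hl : l ∣ s.prodPrimes) :
    (∑ d ∈ s.prodPrimes.divisors, if l ∣ d then s.nu d * selbergWeights s z d else 0) =
      if l ≤ z then μ l * s.selbergTerms l * (selbergSum s z)⁻¹ else 0 := by
  have hswap : ∀ k ∈ s.prodPrimes.divisors,
      (∑ d ∈ s.prodPrimes.divisors with l ∣ d, if d ∣ k then (μ d : ℝ) * s.selbergTerms k else 0) =
        if k = l then (μ l : ℝ) * s.selbergTerms l else 0 := fun k hk ↦ by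
    calc _ = ((∑ d ∈ k.divisors with l ∣ d, μ d : ℤ) : ℝ) * s.selbergTerms k := by
          rw [← Nat.divisors_filter_dvd_of_dvd prodPrimes_ne_zero (Nat.dvd_of_mem_divisors hk),
            ← sum_filter, filter_comm, Int.cast_sum, sum_mul]
      _ = _ := by
          rw [sum_moebius_divisors_filter_dvd (squarefree_of_mem_divisors_prodPrimes hk)]
          split_ifs with h <;> simp [h]
  calc (∑ d ∈ s.prodPrimes.divisors, if l ∣ d then s.nu d * selbergWeights s z d else 0)
      = (selbergSum s z)⁻¹ * ∑ k ∈ s.prodPrimes.divisors with k ≤ z,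
          ∑ d ∈ s.prodPrimes.divisors with l ∣ d,
            if d ∣ k then (μ d : ℝ) * s.selbergTerms k else 0 := by
        rw [← sum_filter, sum_comm, mul_sum]
        exact sum_congr rfl fun d hd ↦
          nu_mul_selbergWeights (Nat.dvd_of_mem_divisors (mem_filter.1 hd).1)
    _ = (selbergSum s z)⁻¹ * ∑ k ∈ s.prodPrimes.divisors with k ≤ z,
          if k = l then (μ l : ℝ) * s.selbergTerms l else 0 := by
        rw [sum_congr rfl fun k hk ↦ hswap k (mem_filter.1 hk).1]
    _ = _ := by
        simp only [sum_ite_eq', mem_filter, Nat.mem_divisors, hl, prodPrimes_ne_zero, ne_eq,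
          not_false_eq_true, and_self, true_and, mul_ite, mul_zero, mul_comm]

theorem mainSum_lambdaSquared_selbergWeights (hz : 1 ≤ z) :
    s.mainSum (lambdaSquared (selbergWeights s z)) = (selbergSum s z)⁻¹ := by
  have hS := (selbergSum_pos (s := s) hz).ne'
  calc s.mainSum (lambdaSquared (selbergWeights s z))
      = ∑ l ∈ s.prodPrimes.divisors,
          if l ≤ z then s.selbergTerms l * ((selbergSum s z)⁻¹) ^ 2 else 0 := by
        rw [mainSum_lambdaSquared_eq_sum_mul_sum_sq]
        refine sum_congr rfl fun l hl ↦ ?_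
        have hlP := Nat.dvd_of_mem_divisors hl
        have hg := (selbergTerms_pos hlP).ne'
        have hμ : (μ l : ℝ) ^ 2 = 1 := by
          exact_mod_cast moebius_sq_eq_one_of_squarefree (squarefree_of_dvd_prodPrimes hlP)
        rw [sum_nu_mul_selbergWeights hlP]
        split_ifs
        · rw [mul_pow, mul_pow, hμ]
          field_simp
        · simp
    _ = selbergSum s z * ((selbergSum s z)⁻¹) ^ 2 := by
        rw [← sum_filter, ← sum_mul, ← selbergSum]
    _ = (selbergSum s z)⁻¹ := by field_simp

theorem lambdaSquared_eq_sum_divisors (w : ℕ → ℝ) {P : ℕ} (hd : d ∈ P.divisors) :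
    lambdaSquared w d =
      ∑ a ∈ P.divisors, ∑ b ∈ P.divisors, if d = a.lcm b then w a * w b else 0 := by
  have hsub : d.divisors ⊆ P.divisors :=
    Nat.divisors_subset_of_dvd (Nat.ne_zero_of_mem_divisors hd) (Nat.dvd_of_mem_divisors hd)
  have hd_ne : d ≠ 0 := (Nat.pos_of_mem_divisors hd).ne'
  rw [lambdaSquared]
  refine (sum_congr rfl fun a _ ↦ sum_subset hsub fun b _ hb ↦ if_neg ?_).trans
    (sum_subset hsub fun a _ ha ↦ sum_eq_zero fun b _ ↦ if_neg ?_)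
  · rintro h
    exact hb (Nat.mem_divisors.2 ⟨h ▸ Nat.dvd_lcm_right a b, hd_ne⟩)
  · rintro h
    exact ha (Nat.mem_divisors.2 ⟨h ▸ Nat.dvd_lcm_left a b, hd_ne⟩)

theorem sum_lambdaSquared_mul (w f : ℕ → ℝ) (P : ℕ) :
    ∑ d ∈ P.divisors, lambdaSquared w d * f d =
      ∑ a ∈ P.divisors, ∑ b ∈ P.divisors, w a * w b * f (a.lcm b) := by
  rw [sum_congr rfl fun d hd ↦ by rw [lambdaSquared_eq_sum_divisors w hd, sum_mul], sum_comm]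
  refine sum_congr rfl fun a ha ↦ ?_
  simp_rw [sum_mul]
  rw [sum_comm]
  refine sum_congr rfl fun b hb ↦ ?_
  have hlcm : a.lcm b ∈ P.divisors := Nat.mem_divisors.2
    ⟨Nat.lcm_dvd (Nat.dvd_of_mem_divisors ha) (Nat.dvd_of_mem_divisors hb),
      Nat.ne_zero_of_mem_divisors ha⟩
  simp only [ite_mul, zero_mul, sum_ite_eq', hlcm, if_true]

theorem abs_lambdaSquared_le (w : ℕ → ℝ) (d : ℕ) :
    |lambdaSquared w d| ≤ lambdaSquared (fun a ↦ |w a|) d := by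
  refine (abs_sum_le_sum_abs _ _).trans (sum_le_sum fun a _ ↦
    (abs_sum_le_sum_abs _ _).trans (sum_le_sum fun b _ ↦ ?_))
  split_ifs
  · exact (abs_mul _ _).le
  · exact abs_zero.le

theorem abs_selbergWeights_mul_abs_rem_le (hz : 1 ≤ z)
    (hν : ∀ d, d ∣ s.prodPrimes → 1 ≤ d * s.nu d)
    (hR : ∀ d, d ∣ s.prodPrimes → |s.rem d| ≤ d * s.nu d)
    {a b : ℕ} (ha : a ∣ s.prodPrimes) (hb : b ∣ s.prodPrimes) :
    |selbergWeights s z a| * |selbergWeights s z b| * |s.rem (a.lcm b)| ≤ a * b := by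
  have hg : a.gcd b ∣ s.prodPrimes := (Nat.gcd_dvd_left a b).trans ha
  have hνa := nu_pos_of_dvd_prodPrimes ha
  have hνb := nu_pos_of_dvd_prodPrimes hb
  have hνg := nu_pos_of_dvd_prodPrimes hg
  have hν_lcm : s.nu (a.lcm b) = s.nu a * s.nu b / s.nu (a.gcd b) := s.nu_mult.map_lcm hνg.ne'
  calc |selbergWeights s z a| * |selbergWeights s z b| * |s.rem (a.lcm b)|
      ≤ (s.nu a)⁻¹ * (s.nu b)⁻¹ * ((a.lcm b : ℕ) * s.nu (a.lcm b)) := by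
        gcongr
        · exact abs_selbergWeights_le hz ha
        · exact abs_selbergWeights_le hz hb
        · exact hR _ (Nat.lcm_dvd ha hb)
    _ = (a.lcm b : ℕ) / s.nu (a.gcd b) := by
        rw [hν_lcm]
        field_simp
    _ ≤ (a.lcm b : ℕ) * (a.gcd b : ℕ) := by
        rw [div_le_iff₀ hνg, mul_assoc]
        exact le_mul_of_one_le_right (Nat.cast_nonneg _) (hν _ hg)
    _ = a * b := by
        rw [mul_comm]
        exact_mod_cast Nat.gcd_mul_lcm a b

theorem errSum_lambdaSquared_selbergWeights_le (hz : 1 ≤ z)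
    (hν : ∀ d, d ∣ s.prodPrimes → 1 ≤ d * s.nu d)
    (hR : ∀ d, d ∣ s.prodPrimes → |s.rem d| ≤ d * s.nu d) :
    s.errSum (lambdaSquared (selbergWeights s z)) ≤ (z : ℝ) ^ 4 := by
  set D := s.prodPrimes.divisors
  have hterm : ∀ a ∈ D, ∀ b ∈ D,
      |selbergWeights s z a| * |selbergWeights s z b| * |s.rem (a.lcm b)| ≤
        (if a ≤ z then (a : ℝ) else 0) * (if b ≤ z then (b : ℝ) else 0) := fun a ha b hb ↦ by
    split_ifs with haz hbz hbz
    · exact abs_selbergWeights_mul_abs_rem_le hz hν hR (Nat.dvd_of_mem_divisors ha)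
        (Nat.dvd_of_mem_divisors hb)
    all_goals simp [selbergWeights_eq_zero_of_lt, not_le.1, *]
  have hsum : ∑ a ∈ D, (if a ≤ z then (a : ℝ) else 0) ≤ (z : ℝ) ^ 2 := by
    calc ∑ a ∈ D, (if a ≤ z then (a : ℝ) else 0) ≤ ∑ a ∈ Ioc 0 z, (a : ℝ) := by
          rw [← sum_filter]
          refine sum_le_sum_of_subset_of_nonneg (fun a ha ↦ ?_) fun _ _ _ ↦ by positivity
          obtain ⟨ha, haz⟩ := mem_filter.1 ha
          exact mem_Ioc.2 ⟨Nat.pos_of_mem_divisors ha, haz⟩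
      _ ≤ #(Ioc 0 z) • (z : ℝ) :=
          sum_le_card_nsmul _ _ _ fun a ha ↦ by exact_mod_cast (mem_Ioc.1 ha).2
      _ = (z : ℝ) ^ 2 := by simp [sq]
  calc s.errSum (lambdaSquared (selbergWeights s z))
      ≤ ∑ d ∈ D, lambdaSquared (fun a ↦ |selbergWeights s z a|) d * |s.rem d| :=
        sum_le_sum fun d _ ↦ by
          gcongr
          exact abs_lambdaSquared_le _ d
    _ = ∑ a ∈ D, ∑ b ∈ D,
          |selbergWeights s z a| * |selbergWeights s z b| * |s.rem (a.lcm b)| :=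
        sum_lambdaSquared_mul _ (fun d ↦ |s.rem d|) _
    _ ≤ ∑ a ∈ D, ∑ b ∈ D, (if a ≤ z then (a : ℝ) else 0) * (if b ≤ z then (b : ℝ) else 0) :=
        sum_le_sum fun a ha ↦ sum_le_sum fun b hb ↦ hterm a ha b hb
    _ = (∑ a ∈ D, (if a ≤ z then (a : ℝ) else 0)) ^ 2 := by rw [sq, sum_mul_sum]
    _ ≤ ((z : ℝ) ^ 2) ^ 2 := by gcongr
    _ = (z : ℝ) ^ 4 := by ring

theorem siftedSum_le_totalMass_div_selbergSum_add (hz : 1 ≤ z)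
    (hν : ∀ d, d ∣ s.prodPrimes → 1 ≤ d * s.nu d)
    (hR : ∀ d, d ∣ s.prodPrimes → |s.rem d| ≤ d * s.nu d) :
    s.siftedSum ≤ s.totalMass / selbergSum s z + (z : ℝ) ^ 4 := by
  have hΛ := s.siftedSum_le_mainSum_errSum_of_upperMoebius _
    (upperMoebius_lambdaSquared _ (selbergWeights_one (s := s) hz))
  rw [mainSum_lambdaSquared_selbergWeights hz, ← div_eq_mul_inv] at hΛ
  linarith [errSum_lambdaSquared_selbergWeights_le hz hν hR]

end SelbergWeights

section CompletelyMultiplicative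

/-- The completely multiplicative function vanishing at `0` that takes the value `f p` at each
prime `p`. -/
noncomputable def completelyMultiplicative (f : ℕ → ℝ) : ℕ →* ℝ where
  toFun n := if n = 0 then 0 else (n.primeFactorsList.map f).prod
  map_one' := by simp
  map_mul' a b := by
    by_cases ha : a = 0
    · simp [ha]
    by_cases hb : b = 0
    · simp [hb]
    rw [if_neg ha, if_neg hb, if_neg (mul_ne_zero ha hb), ← List.prod_append, ← List.map_append]
    exact ((Nat.perm_primeFactorsList_mul ha hb).map _).prod_eq

theorem completelyMultiplicative_prime (f : ℕ → ℝ) {p : ℕ} (hp : p.Prime) :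
    completelyMultiplicative f p = f p := by
  simp [completelyMultiplicative, hp.ne_zero, Nat.primeFactorsList_prime hp]

theorem completelyMultiplicative_nonneg {f : ℕ → ℝ} (hf : ∀ p, p.Prime → 0 ≤ f p) (n : ℕ) :
    0 ≤ completelyMultiplicative f n := by
  change 0 ≤ if n = 0 then (0 : ℝ) else (n.primeFactorsList.map f).prod
  split_ifs
  · exact le_rfl
  · refine List.prod_nonneg fun x hx ↦ ?_
    obtain ⟨p, hp, rfl⟩ := List.mem_map.1 hx
    exact hf p (Nat.prime_of_mem_primeFactorsList hp)

variable {h : ℕ →* ℝ}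

theorem sum_le_prod_inv_one_sub (h_nonneg : ∀ n, 0 ≤ h n) (h_lt_one : ∀ p, p.Prime → h p < 1)
    {S K : Finset ℕ} (hK : ∀ k ∈ K, k ∈ Nat.factoredNumbers S) :
    ∑ k ∈ K, h k ≤ ∏ p ∈ S with p.Prime, (1 - h p)⁻¹ := by
  have h_norm : ∀ {p : ℕ}, p.Prime → ‖h p‖ < 1 := fun {p} hp ↦ by
    rw [Real.norm_of_nonneg (h_nonneg p)]
    exact h_lt_one p hp
  rw [← sum_subtype_of_mem h hK]
  exact sum_le_hasSum _ (fun k _ ↦ h_nonneg k)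
    (EulerProduct.summable_and_hasSum_factoredNumbers_prod_filter_prime_geometric h_norm S).2

open UniqueFactorizationMonoid (radical radical_dvd_self)
open BoundingSieve

theorem sum_radical_eq_le (h_nonneg : ∀ n, 0 ≤ h n) (h_lt_one : ∀ p, p.Prime → h p < 1)
    (z l : ℕ) :
    ∑ n ∈ Ioc 0 z with radical n = l, h n ≤ h l * ∏ p ∈ l.primeFactors, (1 - h p)⁻¹ := by
  set T := {n ∈ Ioc 0 z | radical n = l}
  have hmul : ∀ n ∈ T, l * (n / l) = n := fun n hn ↦
    Nat.mul_div_cancel' ((mem_filter.1 hn).2 ▸ radical_dvd_self)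
  have hfactored : ∀ k ∈ T.image (· / l), k ∈ Nat.factoredNumbers l.primeFactors := by
    intro k hk
    obtain ⟨n, hn, rfl⟩ := mem_image.1 hk
    have hn_ne : n ≠ 0 := (mem_Ioc.1 (mem_filter.1 hn).1).1.ne'
    refine Nat.mem_factoredNumbers_of_primeFactors_subset
      (right_ne_zero_of_mul ((hmul n hn).trans_ne hn_ne)) ?_
    rw [← (mem_filter.1 hn).2, Nat.primeFactors_radical, (mem_filter.1 hn).2]
    exact Nat.primeFactors_mono (Nat.div_dvd_of_dvd (Dvd.intro _ (hmul n hn))) hn_ne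
  calc ∑ n ∈ T, h n = h l * ∑ k ∈ T.image (· / l), h k := by
        rw [sum_image fun a ha b hb hab ↦ by rw [← hmul a ha, ← hmul b hb, hab], mul_sum]
        exact sum_congr rfl fun n hn ↦ by rw [← map_mul, hmul n hn]
    _ ≤ h l * ∏ p ∈ l.primeFactors with p.Prime, (1 - h p)⁻¹ :=
        mul_le_mul_of_nonneg_left (sum_le_prod_inv_one_sub h_nonneg h_lt_one hfactored)
          (h_nonneg l)
    _ = h l * ∏ p ∈ l.primeFactors, (1 - h p)⁻¹ := by
        rw [filter_true_of_mem fun p hp ↦ Nat.prime_of_mem_primeFactors hp]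

theorem selbergTerms_eq_mul_prod_inv_one_sub {s : BoundingSieve} {l : ℕ} (hl : l ∣ s.prodPrimes)
    (h_nu : ∀ p ∈ l.primeFactors, h p = s.nu p) :
    s.selbergTerms l = h l * ∏ p ∈ l.primeFactors, (1 - h p)⁻¹ := by
  have hl_prod : h l = ∏ p ∈ l.primeFactors, h p := by
    rw [← map_prod, Nat.prod_primeFactors_of_squarefree (squarefree_of_dvd_prodPrimes hl)]
  rw [selbergTerms_apply, ← prod_primeFactors_nu hl, hl_prod, ← prod_mul_distrib,
    ← prod_mul_distrib]
  exact prod_congr rfl fun p hp ↦ by rw [h_nu p hp]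

/- Grouping `n` by its radical `l`, each fibre sums to at most the factor `g(l)` of the Selberg
sum, since `g(l)` expands into the sum of `h` over all `n` with radical `l`. -/
theorem sum_le_selbergSum {s : BoundingSieve} {z : ℕ} (h_nonneg : ∀ n, 0 ≤ h n)
    (h_lt_one : ∀ p, p.Prime → h p < 1) (h_nu : ∀ p, p.Prime → p ∣ s.prodPrimes → h p = s.nu p)
    (hz : ∀ p, p.Prime → p ≤ z → p ∣ s.prodPrimes) :
    ∑ n ∈ Ioc 0 z, h n ≤ selbergSum s z := by
  have hradical : ∀ n ∈ Ioc 0 z, radical n ∈ s.prodPrimes.divisors.filter (· ≤ z) := by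
    intro n hn
    obtain ⟨hn_pos, hnz⟩ := mem_Ioc.1 hn
    have hdvd : radical n ∣ s.prodPrimes :=
      (Nat.radical_dvd_iff prodPrimes_ne_zero).2 fun p hp ↦ by
        have hp_prime := Nat.prime_of_mem_primeFactors hp
        have hpz := (Nat.le_of_mem_primeFactors hp).trans hnz
        exact Nat.mem_primeFactors.2 ⟨hp_prime, hz p hp_prime hpz, prodPrimes_ne_zero⟩
    exact mem_filter.2 ⟨Nat.mem_divisors.2 ⟨hdvd, prodPrimes_ne_zero⟩,
      (Nat.radical_le_self_iff.2 hn_pos.ne').trans hnz⟩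
  calc ∑ n ∈ Ioc 0 z, h n
      = ∑ l ∈ s.prodPrimes.divisors with l ≤ z, ∑ n ∈ Ioc 0 z with radical n = l, h n :=
        (sum_fiberwise_of_maps_to hradical h).symm
    _ ≤ ∑ l ∈ s.prodPrimes.divisors with l ≤ z, h l * ∏ p ∈ l.primeFactors, (1 - h p)⁻¹ :=
        sum_le_sum fun l _ ↦ sum_radical_eq_le h_nonneg h_lt_one z l
    _ = selbergSum s z := sum_congr rfl fun l hl ↦ by
        have hlP := Nat.dvd_of_mem_divisors (mem_filter.1 hl).1
        exact (selbergTerms_eq_mul_prod_inv_one_sub hlP fun p hp ↦ h_nu p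
          (Nat.prime_of_mem_primeFactors hp) ((Nat.dvd_of_mem_primeFactors hp).trans hlP)).symm

end CompletelyMultiplicative

section LogSquared

variable {h : ℕ →* ℝ} {m : ℕ}

theorem dvd_or_exists_mul_eq_of_dvd_prime_mul {p k b : ℕ} (hp : p.Prime) (hb : b ∣ p * k) :
    b ∣ k ∨ ∃ c, c ∣ k ∧ p * c = b := by
  obtain ⟨a, c, ha, hc, rfl⟩ := Nat.dvd_mul.1 hb
  rcases (Nat.dvd_prime hp).1 ha with rfl | rfl
  exacts [.inl (by rwa [one_mul]), .inr ⟨c, hc, rfl⟩]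

theorem card_divisors_prime_mul_coprime_le_two_mul {p k : ℕ} (hp : p.Prime) (hk : k ≠ 0) :
    #{b ∈ (p * k).divisors | b.Coprime m} ≤ 2 * #{b ∈ k.divisors | b.Coprime m} := by
  set D := {b ∈ k.divisors | b.Coprime m}
  have hsub : {b ∈ (p * k).divisors | b.Coprime m} ⊆ D ∪ D.image (p * ·) := fun b hb ↦ by
    simp only [D, mem_filter, Nat.mem_divisors, mem_union, mem_image] at hb ⊢
    rcases dvd_or_exists_mul_eq_of_dvd_prime_mul hp hb.1.1 with hbk | ⟨c, hc, rfl⟩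
    · exact .inl ⟨⟨hbk, hk⟩, hb.2⟩
    · exact .inr ⟨c, ⟨⟨hc, hk⟩, hb.2.coprime_mul_left⟩, rfl⟩
  rw [two_mul]
  exact (card_le_card hsub).trans
    ((card_union_le _ _).trans (Nat.add_le_add_left card_image_le _))

theorem card_divisors_prime_mul_coprime_le_of_dvd {p k : ℕ} (hp : p.Prime) (hk : k ≠ 0)
    (hpm : p ∣ m) :
    #{b ∈ (p * k).divisors | b.Coprime m} ≤ #{b ∈ k.divisors | b.Coprime m} := by
  refine card_le_card fun b hb ↦ ?_
  simp only [mem_filter, Nat.mem_divisors] at hb ⊢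
  refine ⟨⟨(dvd_or_exists_mul_eq_of_dvd_prime_mul hp hb.1.1).resolve_right ?_, hk⟩, hb.2⟩
  rintro ⟨c, -, rfl⟩
  exact hp.one_lt.ne' (Nat.eq_one_of_dvd_coprimes hb.2 (dvd_mul_right p c) hpm)

theorem card_divisors_coprime_le (h_dvd : ∀ p, p.Prime → p ∣ m → 1 ≤ p * h p)
    (h_not_dvd : ∀ p, p.Prime → ¬ p ∣ m → 2 ≤ p * h p) {n : ℕ} (hn : n ≠ 0) :
    (#{b ∈ n.divisors | b.Coprime m} : ℝ) ≤ n * h n := by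
  induction n using induction_on_primes with
  | zero => exact absurd rfl hn
  | one => simp [filter_singleton]
  | prime_mul p k hp ih =>
    have hk : k ≠ 0 := right_ne_zero_of_mul hn
    have hval : ((p * k : ℕ) : ℝ) * h (p * k) = (p * h p) * (k * h k) := by
      rw [map_mul, Nat.cast_mul]
      ring
    rw [hval]
    by_cases hpm : p ∣ m
    · calc (#{b ∈ (p * k).divisors | b.Coprime m} : ℝ)
          ≤ 1 * #{b ∈ k.divisors | b.Coprime m} := by
            rw [one_mul]
            exact_mod_cast card_divisors_prime_mul_coprime_le_of_dvd hp hk hpm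
        _ ≤ (p * h p) * (k * h k) :=
            mul_le_mul (h_dvd p hp hpm) (ih hk) (Nat.cast_nonneg _)
              (zero_le_one.trans (h_dvd p hp hpm))
    · calc (#{b ∈ (p * k).divisors | b.Coprime m} : ℝ)
          ≤ 2 * #{b ∈ k.divisors | b.Coprime m} := by
            exact_mod_cast card_divisors_prime_mul_coprime_le_two_mul hp hk
        _ ≤ (p * h p) * (k * h k) :=
            mul_le_mul (h_not_dvd p hp hpm) (ih hk) (Nat.cast_nonneg _)
              (zero_le_two.trans (h_not_dvd p hp hpm))

theorem sum_inv_mul_sum_inv_coprime_le (h_dvd : ∀ p, p.Prime → p ∣ m → 1 ≤ p * h p)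
    (h_not_dvd : ∀ p, p.Prime → ¬ p ∣ m → 2 ≤ p * h p) (N : ℕ) :
    (∑ a ∈ Ioc 0 N, (a : ℝ)⁻¹) * ∑ c ∈ Ioc 0 N with c.Coprime m, (c : ℝ)⁻¹ ≤
      ∑ n ∈ Ioc 0 (N ^ 2), h n := by
  set L := {c ∈ Ioc 0 N | c.Coprime m}
  have hmaps : ∀ x ∈ Ioc 0 N ×ˢ L, x.1 * x.2 ∈ Ioc 0 (N ^ 2) := by
    intro x hx
    simp only [L, mem_product, mem_filter, mem_Ioc] at hx ⊢
    exact ⟨Nat.mul_pos hx.1.1 hx.2.1.1, sq N ▸ Nat.mul_le_mul hx.1.2 hx.2.1.2⟩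
  rw [sum_mul_sum, ← sum_product', ← sum_fiberwise_of_maps_to hmaps]
  refine sum_le_sum fun n hn ↦ ?_
  have hn_pos := (mem_Ioc.1 hn).1
  have hcard : #{x ∈ Ioc 0 N ×ˢ L | x.1 * x.2 = n} ≤ #{b ∈ n.divisors | b.Coprime m} := by
    refine card_le_card_of_injOn Prod.snd (fun x hx ↦ ?_) fun x hx y hy hxy ↦ Prod.ext ?_ hxy
    · simp only [L, coe_filter, mem_product, mem_filter, Set.mem_ofPred_eq] at hx
      simp only [coe_filter, Nat.mem_divisors, Set.mem_ofPred_eq]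
      exact ⟨⟨Dvd.intro_left _ hx.2, hn_pos.ne'⟩, hx.1.2.2⟩
    · simp only [L, coe_filter, mem_product, mem_filter, mem_Ioc, Set.mem_ofPred_eq] at hx hy
      exact Nat.eq_of_mul_eq_mul_right hy.1.2.1.1
        ((hxy ▸ hx.2 : x.1 * y.2 = n).trans hy.2.symm)
  calc ∑ x ∈ Ioc 0 N ×ˢ L with x.1 * x.2 = n, ((x.1 : ℝ)⁻¹ * (x.2 : ℝ)⁻¹)
      = #{x ∈ Ioc 0 N ×ˢ L | x.1 * x.2 = n} * (n : ℝ)⁻¹ := by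
        rw [← nsmul_eq_mul, ← sum_const]
        exact sum_congr rfl fun x hx ↦ by rw [← (mem_filter.1 hx).2, Nat.cast_mul, mul_inv]
    _ ≤ #{b ∈ n.divisors | b.Coprime m} * (n : ℝ)⁻¹ := by gcongr
    _ ≤ (n * h n) * (n : ℝ)⁻¹ := by
        gcongr
        exact card_divisors_coprime_le h_dvd h_not_dvd hn_pos.ne'
    _ = h n := by field_simp

theorem exists_mem_factoredNumbers_mul_coprime (hm : m ≠ 0) {n : ℕ} (hn : n ≠ 0) :
    ∃ k ∈ Nat.factoredNumbers m.primeFactors, ∃ c, c.Coprime m ∧ k * c = n := by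
  induction n using induction_on_primes with
  | zero => exact absurd rfl hn
  | one => exact ⟨1, by simp [Nat.mem_factoredNumbers], 1, by simp, by simp⟩
  | prime_mul p a hp ih =>
    obtain ⟨k, hk, c, hc, rfl⟩ := ih (right_ne_zero_of_mul hn)
    by_cases hpm : p ∣ m
    · refine ⟨p * k, Nat.mul_mem_factoredNumbers ?_ hk, c, hc, mul_assoc p k c⟩
      refine Nat.mem_factoredNumbers_of_primeFactors_subset hp.ne_zero ?_
      rw [hp.primeFactors, singleton_subset_iff]
      exact Nat.mem_primeFactors.2 ⟨hp, hpm, hm⟩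
    · exact ⟨k, hk, p * c, Nat.Coprime.mul_left ((Nat.Prime.coprime_iff_not_dvd hp).2 hpm) hc,
        mul_left_comm k p c⟩

theorem prod_primeFactors_inv_one_sub_inv (hm : m ≠ 0) :
    ∏ p ∈ m.primeFactors, (1 - (p : ℝ)⁻¹)⁻¹ = m / m.totient := by
  have htotient : (m.totient : ℝ) = m * ∏ p ∈ m.primeFactors, (1 - (p : ℝ)⁻¹) := by
    have hrat := congrArg (Rat.cast : ℚ → ℝ) (Nat.totient_eq_mul_prod_factors m)
    push_cast at hrat
    exact hrat
  have hm' : (m : ℝ) ≠ 0 := Nat.cast_ne_zero.2 hm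
  rw [htotient, prod_inv_distrib, div_mul_eq_div_div, div_self hm', one_div]

theorem sum_inv_le_mul_sum_inv_coprime (hm : m ≠ 0) (N : ℕ) :
    ∑ b ∈ Ioc 0 N, (b : ℝ)⁻¹ ≤
      m / m.totient * ∑ c ∈ Ioc 0 N with c.Coprime m, (c : ℝ)⁻¹ := by
  classical
  set K := {k ∈ Ioc 0 N | k ∈ Nat.factoredNumbers m.primeFactors}
  set L := {c ∈ Ioc 0 N | c.Coprime m}
  have hsub : Ioc 0 N ⊆ (K ×ˢ L).image fun x : ℕ × ℕ ↦ x.1 * x.2 := by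
    intro b hb
    obtain ⟨hb_pos, hbN⟩ := mem_Ioc.1 hb
    obtain ⟨k, hk, c, hc, rfl⟩ := exists_mem_factoredNumbers_mul_coprime hm hb_pos.ne'
    have hk_mem : k ∈ Ioc 0 N := mem_Ioc.2 ⟨Nat.pos_of_mul_pos_right hb_pos,
      (Nat.le_mul_of_pos_right k (Nat.pos_of_mul_pos_left hb_pos)).trans hbN⟩
    have hc_mem : c ∈ Ioc 0 N := mem_Ioc.2 ⟨Nat.pos_of_mul_pos_left hb_pos,
      (Nat.le_mul_of_pos_left c (Nat.pos_of_mul_pos_right hb_pos)).trans hbN⟩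
    exact mem_image.2 ⟨(k, c), mem_product.2 ⟨mem_filter.2 ⟨hk_mem, hk⟩,
      mem_filter.2 ⟨hc_mem, hc⟩⟩, rfl⟩
  have hK : ∑ k ∈ K, (k : ℝ)⁻¹ ≤ m / m.totient := by
    let inv : ℕ →* ℝ := invMonoidHom.comp (Nat.castRingHom ℝ : ℕ →* ℝ)
    have h_lt_one : ∀ p, p.Prime → inv p < 1 := fun p hp ↦
      inv_lt_one_of_one_lt₀ (Nat.one_lt_cast.2 hp.one_lt)
    rw [← prod_primeFactors_inv_one_sub_inv hm,
      ← filter_true_of_mem fun p hp ↦ Nat.prime_of_mem_primeFactors hp]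
    exact sum_le_prod_inv_one_sub (h := inv) (fun n ↦ inv_nonneg.2 n.cast_nonneg) h_lt_one
      fun k hk ↦ (mem_filter.1 hk).2
  calc ∑ b ∈ Ioc 0 N, (b : ℝ)⁻¹ ≤ ∑ b ∈ (K ×ˢ L).image fun x : ℕ × ℕ ↦ x.1 * x.2, (b : ℝ)⁻¹ :=
        sum_le_sum_of_subset_of_nonneg hsub fun _ _ _ ↦ by positivity
    _ ≤ ∑ x ∈ K ×ˢ L, ((x.1 * x.2 : ℕ) : ℝ)⁻¹ :=
        sum_image_le_of_nonneg (f := fun b : ℕ ↦ (b : ℝ)⁻¹) fun _ _ ↦ by positivity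
    _ = (∑ k ∈ K, (k : ℝ)⁻¹) * ∑ c ∈ L, (c : ℝ)⁻¹ := by
        rw [sum_mul_sum, sum_product]
        simp only [Nat.cast_mul, mul_inv]
    _ ≤ m / m.totient * ∑ c ∈ L, (c : ℝ)⁻¹ := by gcongr

theorem log_add_one_le_sum_inv (N : ℕ) : log (N + 1) ≤ ∑ a ∈ Ioc 0 N, (a : ℝ)⁻¹ := by
  have h_harmonic := log_add_one_le_harmonic N
  rw [harmonic_eq_sum_Icc] at h_harmonic
  push_cast at h_harmonic
  exact h_harmonic

theorem log_sq_le_mul_sum (h_dvd : ∀ p, p.Prime → p ∣ m → 1 ≤ p * h p)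
    (h_not_dvd : ∀ p, p.Prime → ¬ p ∣ m → 2 ≤ p * h p) (hm : m ≠ 0) (N : ℕ) :
    log (N + 1) ^ 2 ≤ m / m.totient * ∑ n ∈ Ioc 0 (N ^ 2), h n := by
  have hlog := log_add_one_le_sum_inv N
  have hlog_nonneg : 0 ≤ log ((N : ℝ) + 1) := log_nonneg (by simp)
  set H := ∑ a ∈ Ioc 0 N, (a : ℝ)⁻¹
  calc log (N + 1) ^ 2 ≤ H * H := by
        rw [sq]
        exact mul_self_le_mul_self hlog_nonneg hlog
    _ ≤ H * (m / m.totient * ∑ c ∈ Ioc 0 N with c.Coprime m, (c : ℝ)⁻¹) :=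
        mul_le_mul_of_nonneg_left (sum_inv_le_mul_sum_inv_coprime hm N) (hlog_nonneg.trans hlog)
    _ = m / m.totient * (H * ∑ c ∈ Ioc 0 N with c.Coprime m, (c : ℝ)⁻¹) := by ring
    _ ≤ m / m.totient * ∑ n ∈ Ioc 0 (N ^ 2), h n := by
        gcongr
        exact sum_inv_mul_sum_inv_coprime_le h_dvd h_not_dvd N

end LogSquared

section PolynomialSieve

open BoundingSieve Polynomial

/-- The number of roots of `f` modulo `d`. -/
noncomputable def rootCount (f : ℤ[X]) (d : ℕ) : ℕ := Nat.card {x : ZMod d // aeval x f = 0}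

variable {f : ℤ[X]} {d Y z : ℕ}

theorem rootCount_one (f : ℤ[X]) : rootCount f 1 = 1 :=
  have (x : ZMod 1) : aeval x f = 0 := Subsingleton.elim _ _
  by simp [rootCount, this]

theorem rootCount_mul {a b : ℕ} (hab : a.Coprime b) :
    rootCount f (a * b) = rootCount f a * rootCount f b := by
  let e := ZMod.chineseRemainder hab
  have hroot : ∀ x, aeval x f = 0 ↔ aeval (e x).1 f = 0 ∧ aeval (e x).2 f = 0 := fun x ↦ by
    have he : e (aeval x f) = (aeval (e x).1 f, aeval (e x).2 f) :=
      (aeval_algHom_apply e.toRingHom.toIntAlgHom x f).symm.trans (aeval_prod_apply (e x) f)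
    rw [← e.injective.eq_iff, he, map_zero, Prod.mk_eq_zero]
  rw [rootCount, rootCount, rootCount, ← Nat.card_prod]
  exact Nat.card_congr ((e.toEquiv.subtypeEquiv hroot).trans
    (Equiv.subtypeProdEquivProd (p := fun x ↦ aeval x f = 0) (q := fun x ↦ aeval x f = 0)))

/-- The density `ρ(d) / d` of the integers `j` with `d ∣ f(j)`, where `ρ(d)` is the number of roots
of `f` modulo `d`. -/
noncomputable def rootDensity (f : ℤ[X]) : ArithmeticFunction ℝ :=
  ⟨fun d ↦ rootCount f d / d, by simp⟩

theorem rootDensity_apply (f : ℤ[X]) (d : ℕ) : rootDensity f d = rootCount f d / d := rfl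

theorem mul_rootDensity (hd : d ≠ 0) : d * rootDensity f d = rootCount f d :=
  mul_div_cancel₀ _ (Nat.cast_ne_zero.2 hd)

theorem rootDensity_isMultiplicative (f : ℤ[X]) : (rootDensity f).IsMultiplicative := by
  refine ⟨by simp [rootDensity_apply, rootCount_one], fun {a b} hab ↦ ?_⟩
  rw [rootDensity_apply, rootCount_mul hab, Nat.cast_mul, Nat.cast_mul, mul_div_mul_comm]
  rfl

theorem abs_card_Ioc_filter_modEq_sub_le {a b : ℕ} (hab : a ≤ b) (hd : 0 < d) (v : ℕ) :
    |(#{j ∈ Ioc a b | j ≡ v [MOD d]} : ℝ) - (b - a) / d| ≤ 1 := by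
  have hle : ((a : ℚ) - v) / d ≤ (b - v) / d := by gcongr
  have hcard := Nat.Ioc_filter_modEq_card a b hd v
  rw [max_eq_left (sub_nonneg.2 (Int.floor_mono hle))] at hcard
  have hcard' : (#{j ∈ Ioc a b | j ≡ v [MOD d]} : ℚ) =
      ⌊((b : ℚ) - v) / d⌋ - ⌊((a : ℚ) - v) / d⌋ := by exact_mod_cast hcard
  have hdiff : ((b : ℚ) - v) / d - (a - v) / d = (b - a) / d := by ring
  have hrat : |(#{j ∈ Ioc a b | j ≡ v [MOD d]} : ℚ) - (b - a) / d| ≤ 1 := by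
    rw [hcard', ← hdiff, abs_le]
    have := Int.floor_le (((b : ℚ) - v) / d)
    have := Int.lt_floor_add_one (((b : ℚ) - v) / d)
    have := Int.floor_le (((a : ℚ) - v) / d)
    have := Int.lt_floor_add_one (((a : ℚ) - v) / d)
    constructor <;> linarith
  have hreal := (Rat.cast_le (K := ℝ)).2 hrat
  push_cast at hreal
  exact hreal

theorem dvd_natAbs_eval_iff (j : ℕ) : d ∣ (f.eval (j : ℤ)).natAbs ↔ aeval (j : ZMod d) f = 0 := by
  have haeval : aeval (j : ZMod d) f = ((f.eval (j : ℤ) : ℤ) : ZMod d) := by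
    simpa using aeval_algebraMap_apply_eq_algebraMap_eval (A := ZMod d) (j : ℤ) f
  rw [haeval, ZMod.intCast_zmod_eq_zero_iff_dvd, Int.natCast_dvd]

theorem abs_card_dvd_eval_sub_le (hd : d ≠ 0) (Y : ℕ) :
    |(#{j ∈ Ioc 0 Y | d ∣ (f.eval ((j : ℕ) : ℤ)).natAbs} : ℝ) - rootDensity f d * Y| ≤
      rootCount f d := by
  classical
  have : NeZero d := ⟨hd⟩
  set R : Finset (ZMod d) := {x : ZMod d | aeval x f = 0}
  have hcard : rootCount f d = #R := by
    rw [rootCount, Nat.card_eq_fintype_card, Fintype.card_subtype]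
  have hfiber : ∀ x ∈ R, #{j ∈ Ioc 0 Y | d ∣ (f.eval ((j : ℕ) : ℤ)).natAbs ∧ (j : ZMod d) = x} =
      #{j ∈ Ioc 0 Y | j ≡ x.val [MOD d]} := fun x hx ↦ by
    congr 1
    refine filter_congr fun j _ ↦ ?_
    rw [← ZMod.natCast_eq_natCast_iff, ZMod.natCast_zmod_val, dvd_natAbs_eval_iff]
    exact ⟨And.right, fun hj ↦ ⟨hj ▸ (mem_filter.1 hx).2, hj⟩⟩
  have hmaps : ∀ j ∈ {j ∈ Ioc 0 Y | d ∣ (f.eval ((j : ℕ) : ℤ)).natAbs}, (j : ZMod d) ∈ R :=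
    fun j hj ↦ mem_filter.2 ⟨mem_univ _, (dvd_natAbs_eval_iff j).1 (mem_filter.1 hj).2⟩
  simp only [card_eq_sum_card_fiberwise hmaps, filter_filter, sum_congr rfl hfiber]
  calc |((∑ x ∈ R, #{j ∈ Ioc 0 Y | j ≡ x.val [MOD d]} : ℕ) : ℝ) - rootDensity f d * Y|
      = |∑ x ∈ R, ((#{j ∈ Ioc 0 Y | j ≡ x.val [MOD d]} : ℝ) - (Y - (0 : ℕ)) / d)| := by
        rw [sum_sub_distrib, sum_const, nsmul_eq_mul, Nat.cast_sum, rootDensity_apply, hcard,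
          Nat.cast_zero, sub_zero, div_mul_eq_mul_div, mul_div_assoc]
    _ ≤ ∑ _ ∈ R, (1 : ℝ) := (abs_sum_le_sum_abs _ _).trans (sum_le_sum fun _ _ ↦
        abs_card_Ioc_filter_modEq_sub_le Y.zero_le (Nat.pos_of_ne_zero hd) _)
    _ = rootCount f d := by simp [hcard]

/-- The sieve of the values `|f(j)|`, `0 < j ≤ Y`, counted with multiplicity, by the primes
dividing `P`. -/
noncomputable def polynomialSieve (f : ℤ[X]) (Y : ℕ) {P : ℕ} (hP : Squarefree P)
    (hpos : ∀ p, p.Prime → p ∣ P → 0 < rootCount f p)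
    (hlt : ∀ p, p.Prime → p ∣ P → rootCount f p < p) : BoundingSieve where
  support := (Ioc 0 Y).image fun j : ℕ ↦ (f.eval (j : ℤ)).natAbs
  prodPrimes := P
  prodPrimes_squarefree := hP
  weights n := #{j ∈ Ioc 0 Y | (f.eval ((j : ℕ) : ℤ)).natAbs = n}
  weights_nonneg _ := Nat.cast_nonneg _
  totalMass := Y
  nu := rootDensity f
  nu_mult := rootDensity_isMultiplicative f
  nu_pos_of_prime p hp hpP := div_pos (Nat.cast_pos.2 (hpos p hp hpP)) (Nat.cast_pos.2 hp.pos)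
  nu_lt_one_of_prime p hp hpP :=
    (div_lt_one (Nat.cast_pos.2 hp.pos)).2 (Nat.cast_lt.2 (hlt p hp hpP))

theorem sum_image_ite_card_fiber {ι κ : Type*} [DecidableEq κ] (s : Finset ι) (g : ι → κ)
    (p : κ → Prop) [DecidablePred p] :
    (∑ n ∈ s.image g, if p n then (#{i ∈ s | g i = n} : ℝ) else 0) = #{i ∈ s | p (g i)} := by
  have hcomp := sum_comp (s := s) (fun n ↦ if p n then (1 : ℝ) else 0) g
  rw [card_filter, Nat.cast_sum]
  simpa using hcomp.symm

variable {P : ℕ} (hP : Squarefree P) (hpos : ∀ p, p.Prime → p ∣ P → 0 < rootCount f p)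
  (hlt : ∀ p, p.Prime → p ∣ P → rootCount f p < p)

theorem multSum_polynomialSieve (d : ℕ) :
    (polynomialSieve f Y hP hpos hlt).multSum d =
      #{j ∈ Ioc 0 Y | d ∣ (f.eval ((j : ℕ) : ℤ)).natAbs} :=
  sum_image_ite_card_fiber (Ioc 0 Y) (fun j : ℕ ↦ (f.eval (j : ℤ)).natAbs) (d ∣ ·)

theorem siftedSum_polynomialSieve :
    (polynomialSieve f Y hP hpos hlt).siftedSum =
      #{j ∈ Ioc 0 Y | P.Coprime (f.eval ((j : ℕ) : ℤ)).natAbs} :=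
  sum_image_ite_card_fiber (Ioc 0 Y) (fun j : ℕ ↦ (f.eval (j : ℤ)).natAbs) P.Coprime

theorem card_coprime_eval_le (hz : 1 ≤ z) :
    (#{j ∈ Ioc 0 Y | P.Coprime (f.eval ((j : ℕ) : ℤ)).natAbs} : ℝ) ≤
      Y / selbergSum (polynomialSieve f Y hP hpos hlt) z + (z : ℝ) ^ 4 := by
  set s := polynomialSieve f Y hP hpos hlt
  have hd_ne : ∀ d, d ∣ s.prodPrimes → d ≠ 0 := fun d hd ↦ ne_zero_of_dvd_ne_zero hP.ne_zero hd
  have hν : ∀ d, d ∣ s.prodPrimes → 1 ≤ d * s.nu d := fun d hd ↦ by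
    have hν_pos : 0 < s.nu d := nu_pos_of_dvd_prodPrimes hd
    have hd_pos : (0 : ℝ) < d := Nat.cast_pos.2 (Nat.pos_of_ne_zero (hd_ne d hd))
    have hmul : d * s.nu d = rootCount f d := mul_rootDensity (hd_ne d hd)
    have hcount : 0 < (rootCount f d : ℝ) := hmul ▸ mul_pos hd_pos hν_pos
    rw [hmul]
    exact_mod_cast hcount
  have hR : ∀ d, d ∣ s.prodPrimes → |s.rem d| ≤ d * s.nu d := fun d hd ↦ by
    rw [rem, multSum_polynomialSieve]
    exact (abs_card_dvd_eval_sub_le (hd_ne d hd) Y).trans_eq (mul_rootDensity (hd_ne d hd)).symm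
  rw [← siftedSum_polynomialSieve hP hpos hlt]
  exact siftedSum_le_totalMass_div_selbergSum_add hz hν hR

end PolynomialSieve

section GoldbachPolynomial

open Polynomial

/-- The polynomial `X (m - X)`, which sieves for the `j` such that `j` and `m - j` are prime. -/
noncomputable def goldbachPolynomial (m : ℕ) : ℤ[X] := X * (C (m : ℤ) - X)

variable {m p Y z N : ℕ}

theorem eval_goldbachPolynomial (m : ℕ) (j : ℤ) : (goldbachPolynomial m).eval j = j * (m - j) := by
  simp [goldbachPolynomial]

theorem rootCount_goldbachPolynomial (m : ℕ) (hp : p.Prime) :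
    rootCount (goldbachPolynomial m) p = ({0, (m : ZMod p)} : Set (ZMod p)).ncard := by
  have : Fact p.Prime := ⟨hp⟩
  have hroots : {x : ZMod p | aeval x (goldbachPolynomial m) = 0} = {0, (m : ZMod p)} := by
    ext x
    simp [goldbachPolynomial, sub_eq_zero, eq_comm]
  rw [← hroots]
  rfl

theorem rootCount_goldbachPolynomial_of_dvd (hp : p.Prime) (hpm : p ∣ m) :
    rootCount (goldbachPolynomial m) p = 1 := by
  rw [rootCount_goldbachPolynomial m hp, (ZMod.natCast_eq_zero_iff m p).2 hpm,
    Set.pair_eq_singleton, Set.ncard_singleton]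

theorem rootCount_goldbachPolynomial_of_not_dvd (hp : p.Prime) (hpm : ¬ p ∣ m) :
    rootCount (goldbachPolynomial m) p = 2 := by
  rw [rootCount_goldbachPolynomial m hp, Set.ncard_pair]
  exact fun h ↦ hpm ((ZMod.natCast_eq_zero_iff m p).1 h.symm)

theorem rootCount_goldbachPolynomial_pos (m : ℕ) (hp : p.Prime) :
    0 < rootCount (goldbachPolynomial m) p := by
  by_cases hpm : p ∣ m
  · simp [rootCount_goldbachPolynomial_of_dvd hp hpm]
  · simp [rootCount_goldbachPolynomial_of_not_dvd hp hpm]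

theorem rootCount_goldbachPolynomial_lt (hm : Even m) (hp : p.Prime) :
    rootCount (goldbachPolynomial m) p < p := by
  by_cases hpm : p ∣ m
  · exact (rootCount_goldbachPolynomial_of_dvd hp hpm).trans_lt hp.one_lt
  · have hp_ne : 2 ≠ p := fun h ↦ hpm (h ▸ hm.two_dvd)
    exact (rootCount_goldbachPolynomial_of_not_dvd hp hpm).trans_lt (hp.two_le.lt_of_ne hp_ne)

theorem rootDensity_goldbachPolynomial_lt_one (hm : Even m) (hp : p.Prime) :
    rootDensity (goldbachPolynomial m) p < 1 :=
  (div_lt_one (Nat.cast_pos.2 hp.pos)).2 (Nat.cast_lt.2 (rootCount_goldbachPolynomial_lt hm hp))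

/-- The sieve of the integers `|j (m - j)|`, `0 < j ≤ Y`, by the primes up to `z`. -/
noncomputable def goldbachSieve (hm : Even m) (Y z : ℕ) : BoundingSieve :=
  polynomialSieve (goldbachPolynomial m) Y (squarefree_primorial z)
    (fun _ hp _ ↦ rootCount_goldbachPolynomial_pos m hp)
    (fun _ hp _ ↦ rootCount_goldbachPolynomial_lt hm hp)

theorem log_sq_le_mul_selbergSum (hm : Even m) (hm0 : m ≠ 0) (Y N : ℕ) :
    log (N + 1) ^ 2 ≤ m / m.totient * selbergSum (goldbachSieve hm Y (N ^ 2)) (N ^ 2) := by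
  set h := completelyMultiplicative (rootDensity (goldbachPolynomial m))
  have h_prime {p : ℕ} (hp : p.Prime) : h p = rootDensity (goldbachPolynomial m) p :=
    completelyMultiplicative_prime _ hp
  have mul_h {p : ℕ} (hp : p.Prime) : p * h p = rootCount (goldbachPolynomial m) p := by
    rw [h_prime hp, mul_rootDensity hp.ne_zero]
  have h_nonneg : ∀ n, 0 ≤ h n :=
    completelyMultiplicative_nonneg fun p _ ↦ div_nonneg (Nat.cast_nonneg _) (Nat.cast_nonneg _)
  calc log (N + 1) ^ 2 ≤ m / m.totient * ∑ n ∈ Ioc 0 (N ^ 2), h n :=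
        log_sq_le_mul_sum
          (fun p hp hpm ↦ by simp [mul_h hp, rootCount_goldbachPolynomial_of_dvd hp hpm])
          (fun p hp hpm ↦ by simp [mul_h hp, rootCount_goldbachPolynomial_of_not_dvd hp hpm])
          hm0 N
    _ ≤ _ := by
        gcongr
        exact sum_le_selbergSum h_nonneg
          (fun p hp ↦ (h_prime hp).trans_lt (rootDensity_goldbachPolynomial_lt_one hm hp))
          (fun p hp _ ↦ h_prime hp) (fun p hp hpz ↦ hp.dvd_primorial_iff.2 hpz)

theorem card_prime_prime_sub_le_card_coprime (m : ℕ) (hz : 1 ≤ z) :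
    #{j ∈ Ioc 0 Y | Nat.Prime j ∧ Prime ((m : ℤ) - j)} ≤
      #{j ∈ Ioc 0 Y | (primorial z).Coprime ((goldbachPolynomial m).eval ((j : ℕ) : ℤ)).natAbs} +
        4 * z := by
  have hcoprime {q : ℕ} (hq : q.Prime) (hzq : z < q) : (primorial z).Coprime q :=
    (hq.coprime_iff_not_dvd.2 fun h ↦ hzq.not_ge (hq.dvd_primorial_iff.1 h)).symm
  have hsub : {j ∈ Ioc 0 Y | Nat.Prime j ∧ Prime ((m : ℤ) - j)} ⊆
      {j ∈ Ioc 0 Y |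
        (primorial z).Coprime ((goldbachPolynomial m).eval ((j : ℕ) : ℤ)).natAbs} ∪
        (Ioc 0 z ∪ Icc (m - z) (m + z)) := by
    intro j hj
    obtain ⟨hjY, hj_prime, hmj_prime⟩ := mem_filter.1 hj
    by_cases hjz : j ≤ z
    · exact mem_union_right _ (mem_union_left _ (mem_Ioc.2 ⟨hj_prime.pos, hjz⟩))
    by_cases hmjz : ((m : ℤ) - j).natAbs ≤ z
    · exact mem_union_right _ (mem_union_right _ (mem_Icc.2 (by omega)))
    refine mem_union_left _ (mem_filter.2 ⟨hjY, ?_⟩)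
    rw [eval_goldbachPolynomial, Int.natAbs_mul, Int.natAbs_natCast]
    exact (hcoprime hj_prime (not_le.1 hjz)).mul_right
      (hcoprime (Int.prime_iff_natAbs_prime.1 hmj_prime) (not_le.1 hmjz))
  refine (card_le_card hsub).trans ((card_union_le _ _).trans (Nat.add_le_add_left ?_ _))
  refine (card_union_le _ _).trans ?_
  rw [Nat.card_Ioc, Nat.card_Icc]
  omega

theorem card_prime_prime_sub_le (hm : Even m) (hm0 : m ≠ 0) (hN : 1 ≤ N) :
    (#{j ∈ Ioc 0 Y | Nat.Prime j ∧ Prime ((m : ℤ) - j)} : ℝ) ≤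
      m / m.totient * Y / log (N + 1) ^ 2 + N ^ 8 + 4 * N ^ 2 := by
  have hz : 1 ≤ N ^ 2 := Nat.one_le_pow _ _ hN
  set S := selbergSum (goldbachSieve hm Y (N ^ 2)) (N ^ 2)
  have hS : 0 < S := selbergSum_pos hz
  have hlog : 0 < log (N + 1) ^ 2 :=
    pow_pos (log_pos (lt_add_of_pos_left 1 (Nat.cast_pos.2 hN))) 2
  have hmain : Y / S ≤ m / m.totient * Y / log (N + 1) ^ 2 := by
    rw [div_le_div_iff₀ hS hlog]
    calc Y * log (N + 1) ^ 2 ≤ Y * (m / m.totient * S) := by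
          gcongr
          exact log_sq_le_mul_selbergSum hm hm0 Y N
      _ = m / m.totient * Y * S := by ring
  have hsift := card_coprime_eval_le (f := goldbachPolynomial m) (Y := Y)
    (squarefree_primorial (N ^ 2)) (fun _ hp _ ↦ rootCount_goldbachPolynomial_pos m hp)
    (fun _ hp _ ↦ rootCount_goldbachPolynomial_lt hm hp) hz
  calc (#{j ∈ Ioc 0 Y | Nat.Prime j ∧ Prime ((m : ℤ) - j)} : ℝ)
      ≤ #{j ∈ Ioc 0 Y |
          (primorial (N ^ 2)).Coprime ((goldbachPolynomial m).eval ((j : ℕ) : ℤ)).natAbs} +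
          4 * (N ^ 2 : ℕ) := mod_cast card_prime_prime_sub_le_card_coprime m hz
    _ ≤ Y / S + (N ^ 2 : ℕ) ^ 4 + 4 * (N ^ 2 : ℕ) := by gcongr; exact hsift
    _ ≤ m / m.totient * Y / log (N + 1) ^ 2 + (N ^ 2 : ℕ) ^ 4 + 4 * (N ^ 2 : ℕ) := by gcongr
    _ = _ := by push_cast; ring

end GoldbachPolynomial

section SingularSeries

variable {m N : ℕ}

theorem prod_one_sub_inv_sq (hN : 1 ≤ N) :
    ∏ k ∈ Icc 2 N, (1 - 1 / (k : ℝ) ^ 2) = (1 / 2 + 1 / (2 * N) : ℝ) := by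
  induction N, hN using Nat.le_induction with
  | base => norm_num
  | succ n hn ih =>
    rw [prod_Icc_succ_top (by omega), ih]
    push_cast
    field_simp
    ring

theorem one_sub_one_div_sq_mem_Icc {k : ℕ} (hk : 1 ≤ k) : 1 - 1 / (k : ℝ) ^ 2 ∈ Set.Icc 0 1 := by
  have hk_sq : (1 : ℝ) ≤ (k : ℝ) ^ 2 := one_le_pow₀ (Nat.one_le_cast.2 hk)
  exact ⟨sub_nonneg.2 (div_le_one_of_le₀ hk_sq (by positivity)), sub_le_self _ (by positivity)⟩

theorem half_le_prod_one_sub_inv_sub_one_sq {t : Finset ℕ} (ht : ∀ n ∈ t, 3 ≤ n) :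
    (1 / 2 : ℝ) ≤ ∏ n ∈ t, (1 - 1 / ((n : ℝ) - 1) ^ 2) := by
  have hinj : Set.InjOn (fun n : ℕ ↦ n - 1) (t : Set ℕ) := fun a ha b hb hab ↦ by
    have := ht a ha
    have := ht b hb
    simp only at hab
    omega
  have hsub : t.image (fun n ↦ n - 1) ⊆ Icc 2 (t.sup id + 1) := image_subset_iff.2 fun n hn ↦ by
    have := ht n hn
    have : n ≤ t.sup id := le_sup (f := id) hn
    simp only [mem_Icc]
    omega
  have hfactor : ∀ k ∈ Icc 2 (t.sup id + 1), 1 - 1 / (k : ℝ) ^ 2 ∈ Set.Icc 0 1 := fun k hk ↦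
    one_sub_one_div_sq_mem_Icc (one_le_two.trans (mem_Icc.1 hk).1)
  calc (1 / 2 : ℝ) ≤ 1 / 2 + 1 / (2 * (t.sup id + 1 : ℕ)) := le_add_of_nonneg_right (by positivity)
    _ = ∏ k ∈ Icc 2 (t.sup id + 1), (1 - 1 / (k : ℝ) ^ 2) :=
        (prod_one_sub_inv_sq (Nat.le_add_left 1 _)).symm
    _ ≤ ∏ k ∈ t.image (fun n : ℕ ↦ n - 1), (1 - 1 / (k : ℝ) ^ 2) :=
        prod_le_prod_of_subset_of_le_one hsub (fun k hk ↦ (hfactor k hk).1)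
          fun k hk _ ↦ (hfactor k hk).2
    _ = ∏ n ∈ t, (1 - 1 / ((n : ℝ) - 1) ^ 2) := by
        rw [prod_image hinj]
        refine prod_congr rfl fun n hn ↦ ?_
        rw [Nat.cast_pred (by linarith [ht n hn])]

theorem multipliable_one_sub_inv_sub_one_sq (s : Set ℕ) :
    Multipliable fun n : s ↦ 1 - 1 / ((n : ℕ) - 1 : ℝ) ^ 2 := by
  have hsummable : Summable fun n : ℕ ↦ 1 / ((n : ℝ) - 1) ^ 2 :=
    (summable_nat_add_iff 1).1 (by simp)
  simp only [sub_eq_add_neg (1 : ℝ) (1 / _)]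
  exact multipliable_one_add_of_summable (hsummable.subtype s).neg.norm

theorem half_le_tprod_one_sub_inv_sub_one_sq {s : Set ℕ} (hs : ∀ n ∈ s, 3 ≤ n) :
    (1 / 2 : ℝ) ≤ ∏' n : s, (1 - 1 / ((n : ℕ) - 1 : ℝ) ^ 2) := by
  refine ge_of_tendsto (multipliable_one_sub_inv_sub_one_sq s).hasProd (.of_forall fun t ↦ ?_)
  refine (half_le_prod_one_sub_inv_sub_one_sq fun n hn ↦ ?_).trans_eq
    (prod_map t (.subtype (· ∈ s)) fun n : ℕ ↦ 1 - 1 / ((n : ℝ) - 1) ^ 2)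
  obtain ⟨k, -, rfl⟩ := mem_map.1 hn
  exact hs k k.2

theorem prod_primeFactors_one_add_inv_sub_one (hm : m ≠ 0) :
    ∏ p ∈ m.primeFactors, (1 + 1 / ((p : ℝ) - 1)) = m / m.totient := by
  rw [← prod_primeFactors_inv_one_sub_inv hm]
  refine prod_congr rfl fun p hp ↦ ?_
  have hp_one : (1 : ℝ) < p := Nat.one_lt_cast.2 (Nat.prime_of_mem_primeFactors hp).one_lt
  have hp_sub : (p : ℝ) - 1 ≠ 0 := sub_ne_zero.2 hp_one.ne'
  field_simp
  ring

theorem div_totient_le_two_mul_singularSeries (hm : Even m) (hm0 : m ≠ 0) :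
    m / m.totient ≤ 2 * singularSeries m := by
  have hprimes : ∀ p ∈ {p : ℕ | p.Prime ∧ ¬ p ∣ m}, 3 ≤ p := fun p ⟨hp, hpm⟩ ↦
    hp.two_le.lt_of_ne fun h ↦ hpm (h ▸ hm.two_dvd)
  have htprod := half_le_tprod_one_sub_inv_sub_one_sq hprimes
  calc (m : ℝ) / m.totient = 2 * (1 / 2 * (m / m.totient)) := by ring
    _ ≤ 2 * singularSeries m := by
        rw [singularSeries, prod_primeFactors_one_add_inv_sub_one hm0]
        gcongr
        exact htprod

end SingularSeries

section GoldbachBound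

variable {m : ℕ} {y : ℝ}

theorem one_le_div_totient (hm : m ≠ 0) : 1 ≤ (m : ℝ) / m.totient :=
  (one_le_div₀ (Nat.cast_pos.2 (Nat.totient_pos.2 (Nat.pos_of_ne_zero hm)))).2
    (Nat.cast_le.2 m.totient_le)

theorem pow_eight_le_pow_sixteen_div_log_sq {x : ℝ} (hx : 1 < x) : x ^ 8 ≤ x ^ 16 / log x ^ 2 := by
  have hlog : 0 < log x := log_pos hx
  have hlog_le : log x ≤ x ^ 4 := (log_le_self (by positivity)).trans (le_self_pow₀ hx.le (by simp))
  rw [le_div_iff₀ (by positivity)]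
  calc x ^ 8 * log x ^ 2 ≤ x ^ 8 * (x ^ 4) ^ 2 := by gcongr
    _ = x ^ 16 := by ring

theorem card_prime_prime_sub_floor_pow_sixteen_le {x : ℝ} (hm : Even m) (hm0 : m ≠ 0)
    (hx : 1 < x) :
    (#{j ∈ Ioc 0 ⌊x ^ 16⌋₊ | Nat.Prime j ∧ Prime ((m : ℤ) - j)} : ℝ) ≤
      6 * (m / m.totient * x ^ 16 / log x ^ 2) := by
  have hlog : 0 < log x := log_pos hx
  set N := ⌊x⌋₊
  have hN : 1 ≤ N := Nat.le_floor (by simpa using hx.le)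
  have hNx : (N : ℝ) ≤ x := Nat.floor_le (by positivity)
  have hxN : x ≤ N + 1 := (Nat.lt_floor_add_one x).le
  have herror : x ^ 8 ≤ m / m.totient * x ^ 16 / log x ^ 2 := by
    rw [mul_div_assoc]
    exact (pow_eight_le_pow_sixteen_div_log_sq hx).trans
      (le_mul_of_one_le_left (by positivity) (one_le_div_totient hm0))
  calc (#{j ∈ Ioc 0 ⌊x ^ 16⌋₊ | Nat.Prime j ∧ Prime ((m : ℤ) - j)} : ℝ)
      ≤ m / m.totient * ⌊x ^ 16⌋₊ / log (N + 1) ^ 2 + N ^ 8 + 4 * N ^ 2 :=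
        card_prime_prime_sub_le hm hm0 hN
    _ ≤ m / m.totient * x ^ 16 / log x ^ 2 + x ^ 8 + 4 * x ^ 8 := by
        gcongr
        · exact Nat.floor_le (by positivity)
        · exact (pow_le_pow_left₀ (by positivity) hNx 2).trans
            (pow_le_pow_right₀ hx.le (by norm_num))
    _ ≤ 6 * (m / m.totient * x ^ 16 / log x ^ 2) := by linarith

theorem card_prime_prime_sub_floor_le (hm : Even m) (hm0 : m ≠ 0) (hy : 1 < y) :
    (#{j ∈ Ioc 0 ⌊y⌋₊ | Nat.Prime j ∧ Prime ((m : ℤ) - j)} : ℝ) ≤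
      1536 * (m / m.totient) * y / log y ^ 2 := by
  obtain ⟨x, hx, rfl⟩ : ∃ x : ℝ, 1 < x ∧ x ^ 16 = y :=
    ⟨y ^ (16 : ℝ)⁻¹, one_lt_rpow hy (by norm_num),
      rpow_inv_natCast_pow (zero_le_one.trans hy.le) (by norm_num : 16 ≠ 0)⟩
  refine (card_prime_prime_sub_floor_pow_sixteen_le hm hm0 hx).trans_eq ?_
  rw [log_pow, mul_pow]
  have hlog : log x ≠ 0 := (log_pos hx).ne'
  field_simp
  norm_num

theorem ncard_goldbach_le_card_prime_prime_sub (m : ℕ) (y : ℝ) :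
    {j : ℕ | 2 ≤ j ∧ (j : ℝ) ≤ y ∧ Nat.Prime j ∧ Nat.Prime (m - j)}.ncard ≤
      #{j ∈ Ioc 0 ⌊y⌋₊ | Nat.Prime j ∧ Prime ((m : ℤ) - j)} := by
  rw [← Set.ncard_coe_finset]
  refine Set.ncard_le_ncard (fun j ⟨_, hjy, hj, hmj⟩ ↦ ?_) (finite_toSet _)
  have hjm : j ≤ m := (Nat.lt_of_sub_pos hmj.pos).le
  refine mem_coe.2 (mem_filter.2 ⟨mem_Ioc.2 ⟨hj.pos, Nat.le_floor hjy⟩, hj, ?_⟩)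
  rw [← Nat.cast_sub hjm]
  exact Nat.prime_iff_prime_int.1 hmj

end GoldbachBound

end GoldbachSieve

/- Primality in `ℤ` ignores the sign, so the `j > m` with `j - m` prime are counted as well. -/
theorem sieve_goldbach_upper_bound_general :
    ∃ C : ℝ, 0 < C ∧ ∀ m : ℕ, Even m → m ≠ 0 → ∀ y : ℝ, 1 < y →
      (Finset.card {j ∈ Finset.Ioc 0 ⌊y⌋₊ | Nat.Prime j ∧ Prime ((m : ℤ) - j)} : ℝ) ≤
        C * singularSeries m * y / log y ^ 2 := by
  refine ⟨3072, by norm_num, fun m hm hm0 y hy ↦ ?_⟩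
  have hsingular := GoldbachSieve.div_totient_le_two_mul_singularSeries hm hm0
  calc (Finset.card {j ∈ Finset.Ioc 0 ⌊y⌋₊ | Nat.Prime j ∧ Prime ((m : ℤ) - j)} : ℝ)
      ≤ 1536 * (m / m.totient) * y / log y ^ 2 :=
        GoldbachSieve.card_prime_prime_sub_floor_le hm hm0 hy
    _ ≤ 1536 * (2 * singularSeries m) * y / log y ^ 2 := by gcongr
    _ = 3072 * singularSeries m * y / log y ^ 2 := by ring

/-- Sieve upper bound: there is an absolute `C > 0` such that for every even `m ≥ 4` and
every real `4 ≤ y ≤ m`, the number of `2 ≤ j ≤ y` with `j` and `m - j` both prime is at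
most `C·C(m)·y/(log y)²`. -/
theorem sieve_goldbach_upper_bound :
    ∃ C : ℝ, 0 < C ∧ ∀ m : ℕ, Even m → 4 ≤ m →
      ∀ y : ℝ, 4 ≤ y → y ≤ m →
        (Set.ncard {j : ℕ | 2 ≤ j ∧ (j : ℝ) ≤ y ∧ Nat.Prime j ∧ Nat.Prime (m - j)} : ℝ) ≤
          C * singularSeries m * y / (Real.log y) ^ 2 := by
  obtain ⟨C, hC, hbound⟩ := sieve_goldbach_upper_bound_general
  exact ⟨C, hC, fun m hm hm4 y hy _ ↦
    (Nat.cast_le.2 (GoldbachSieve.ncard_goldbach_le_card_prime_prime_sub m y)).trans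
      (hbound m hm (by omega) y (by linarith))⟩
end
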